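/- arXiv:1110.6140 — 2 statements merged into one kernel-verified Lean document; each statement's English description precedes it below -/
import Mathlib

section
/- Every dendroid in Euclidean n-space *-includes a tree: for every dendroid D ⊆ ℝⁿ and every real ε > 0 there exists a tree (as a continuum) E with E ⊆ D and d_H(E, D) < ε. -/
open Set Metric

section TopDefs

variable {α : Type*} [TopologicalSpace α]

/-- `A ⊆ α` is an arc with endpoints `x` and `y`:
a homeomorphic (continuous injective) image of `[0,1]` sending `0 ↦ x`, `1 ↦ y`. -/
def IsArc (A : Set α) (x y : α) : Prop :=
  ∃ f : Set.Icc (0:ℝ) 1 → α, Continuous f ∧ Function.Injective f ∧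
    Set.range f = A ∧ f ⟨0, by norm_num⟩ = x ∧ f ⟨1, by norm_num⟩ = y

/-- A continuum: a nonempty compact connected set. -/
def IsContinuum (X : Set α) : Prop := IsCompact X ∧ IsConnected X

/-- Any two distinct points of `X` are endpoints of an arc contained in `X`. -/
def ArcwiseConnectedSet (X : Set α) : Prop :=
  ∀ x ∈ X, ∀ y ∈ X, x ≠ y → ∃ A, A ⊆ X ∧ IsArc A x y

/-- `X` is unicoherent: for all closed connected `A, B ⊆ X` with `A ∪ B = X`,
the intersection `A ∩ B` is connected. -/
def UnicoherentSet (X : Set α) : Prop :=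
  ∀ A B : Set α, A ⊆ X → B ⊆ X → IsClosed A → IsClosed B →
    IsConnected A → IsConnected B → A ∪ B = X → IsConnected (A ∩ B)

/-- Every subcontinuum of `X` is unicoherent. -/
def HereditarilyUnicoherent (X : Set α) : Prop :=
  ∀ Y, Y ⊆ X → IsContinuum Y → UnicoherentSet Y

/-- A dendroid: an arcwise connected, hereditarily unicoherent continuum. -/
def IsDendroid (X : Set α) : Prop :=
  IsContinuum X ∧ ArcwiseConnectedSet X ∧ HereditarilyUnicoherent X

/-- The unit circle `S¹`. -/
def unitCircle : Set (EuclideanSpace ℝ (Fin 2)) := Metric.sphere 0 1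

/-- A dendrite: a locally connected continuum containing no subset homeomorphic to `S¹`. -/
def IsDendrite (X : Set α) : Prop :=
  IsContinuum X ∧ LocallyConnectedSpace ↥X ∧
    ∀ S : Set α, S ⊆ X → IsEmpty (↥S ≃ₜ ↥unitCircle)

/-- `x` and `y` lie in the same arc-component of `Y`. -/
def SameArcComponent (Y : Set α) (x y : α) : Prop :=
  x = y ∨ ∃ A, A ⊆ Y ∧ IsArc A x y

/-- `x` is a ramification point of `X`: `X \ {x}` has at least three arc-components. -/
def IsRamificationPoint (X : Set α) (x : α) : Prop :=
  x ∈ X ∧ ∃ u v w, u ∈ X \ {x} ∧ v ∈ X \ {x} ∧ w ∈ X \ {x} ∧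
    ¬ SameArcComponent (X \ {x}) u v ∧ ¬ SameArcComponent (X \ {x}) u w ∧
    ¬ SameArcComponent (X \ {x}) v w

/-- A tree (as a continuum): a dendrite with finitely many ramification points. -/
def IsTreeContinuum (X : Set α) : Prop :=
  IsDendrite X ∧ {x | IsRamificationPoint X x}.Finite

end TopDefs

section CompDefs

/-- The rational open ball in `ℝ²` coded by `((q₁, q₂), r)`. -/
def ballOfCode (c : (ℚ × ℚ) × ℚ) : Set (ℝ × ℝ) :=
  {x | dist x (((c.1.1 : ℝ), (c.1.2 : ℝ)) : ℝ × ℝ) < (c.2 : ℝ)}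

/-- A closed set `F ⊆ ℝ²` is `Π⁰₁` if it is the complement of the union of the rational
open balls coded by some c.e. set of codes. -/
def IsPi01Closed (F : Set (ℝ × ℝ)) : Prop :=
  ∃ W : (ℚ × ℚ) × ℚ → Prop, REPred W ∧ F = Set.univ \ ⋃ c ∈ {c | W c}, ballOfCode c

/-- `F ⊆ ℝ²` is c.e. closed if the set of codes of rational open balls meeting `F` is c.e. -/
def IsCEClosed (F : Set (ℝ × ℝ)) : Prop :=
  REPred (fun c : (ℚ × ℚ) × ℚ => (F ∩ ballOfCode c).Nonempty)

/-- A computable closed subset of `ℝ²`: both `Π⁰₁` and c.e. closed. -/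
def IsComputableClosed (F : Set (ℝ × ℝ)) : Prop :=
  IsPi01Closed F ∧ IsCEClosed F

/-- A point of `ℝ²` is computable if the set of codes of rational open balls
containing it is c.e. -/
def IsComputablePoint (x : ℝ × ℝ) : Prop :=
  REPred (fun c : (ℚ × ℚ) × ℚ => x ∈ ballOfCode c)

end CompDefs

section PsiDefs

/-- A tree of binary strings: a set of finite binary strings closed under prefixes. -/
def IsTreeOfStrings (T : Set (List Bool)) : Prop :=
  ∀ σ ∈ T, ∀ τ : List Bool, τ <+: σ → τ ∈ T

/-- The point `ψ(σ) ∈ ℝ²` associated with the binary string `σ`. -/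
noncomputable def psiPt (σ : List Bool) : ℝ × ℝ :=
  ((3:ℝ) ^ (-(σ.length : ℤ)) / 2 +
      2 * ∑ i ∈ Finset.range σ.length,
        (if σ.getD i false then (3:ℝ) ^ (-((i : ℤ) + 1)) else 0),
    (2:ℝ) ^ (-(σ.length : ℤ)))

/-- The planar embedding `Ψ(T)` of a tree `T` of binary strings: the closure of the union
of the segments from `ψ(σ⁻)` to `ψ(σ)` over nonempty `σ ∈ T` (together with the points
`ψ(σ)`, `σ ∈ T`, which makes no difference except for the degenerate trees `∅`, `{⟨⟩}`). -/
noncomputable def PsiSet (T : Set (List Bool)) : Set (ℝ × ℝ) :=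
  closure (psiPt '' T ∪ ⋃ σ ∈ T, ⋃ (_ : σ ≠ []), segment ℝ (psiPt σ.dropLast) (psiPt σ))

end PsiDefs

section Helpers

open unitInterval

variable {α : Type*} [TopologicalSpace α]

lemma isArc_sub (f : I → α) (hf : Continuous f) (hi : Function.Injective f) (s t : I)
    (hst : s ≠ t) : IsArc (f '' uIcc s t) (f s) (f t) := by
  refine ⟨f ∘ Icc.convexComb s t, ?_, ?_, ?_, ?_, ?_⟩
  · exact hf.comp (by fun_prop)
  · refine hi.comp ?_
    intro a b hab
    have h := congrArg Subtype.val hab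
    simp only [Icc.coe_convexComb] at h
    have hne : (t : ℝ) - s ≠ 0 := fun h => hst (Subtype.ext (by linarith))
    apply Subtype.ext
    apply mul_right_cancel₀ hne
    linarith
  · rw [range_comp, Path.range_subpathAux]
  · have := Icc.convexComb_zero s t
    exact congrArg f this
  · have := Icc.convexComb_one s t
    exact congrArg f this

lemma sameArc_sub {Y : Set α} (f : I → α) (hf : Continuous f) (hi : Function.Injective f)
    (s t : I) (h : ∀ c ∈ uIcc s t, f c ∈ Y) : SameArcComponent Y (f s) (f t) := by
  by_cases hst : s = t
  · left; rw [hst]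
  · right
    refine ⟨_, ?_, isArc_sub f hf hi s t hst⟩
    rintro _ ⟨c, hc, rfl⟩
    exact h c hc

lemma isArc_concat {A B : Set α} {x y z : α} (hA : IsArc A x y) (hB : IsArc B y z)
    (hAB : A ∩ B ⊆ {y}) : IsArc (A ∪ B) x z := by
  obtain ⟨f, hf, fi, fr, f0, f1⟩ := hA
  obtain ⟨g, hg, gi, gr, g0, g1⟩ := hB
  let p : Path x y := ⟨⟨f, hf⟩, f0, f1⟩
  let q : Path y z := ⟨⟨g, hg⟩, g0, g1⟩
  have key : ∀ a b : I, f a = g b → (a : ℝ) = 1 ∧ (b : ℝ) = 0 := by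
    intro a b hab
    have h1 : f a = y := hAB ⟨fr ▸ mem_range_self a, hab ▸ gr ▸ mem_range_self b⟩
    have ha := fi (h1.trans f1.symm)
    have hb := gi ((hab.symm.trans h1).trans g0.symm)
    rw [ha, hb]; exact ⟨rfl, rfl⟩
  refine ⟨p.trans q, (p.trans q).continuous, ?_, ?_, (p.trans q).source, (p.trans q).target⟩
  · intro a b hab
    rw [Path.trans_apply, Path.trans_apply] at hab
    apply Subtype.ext
    split_ifs at hab with h1 h2 h2
    · have := congrArg Subtype.val (fi hab)
      simp at this; exact this
    · have := key _ _ hab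
      simp only at this
      push Not at h2
      linarith [this.1, this.2]
    · have := key _ _ hab.symm
      simp only at this
      push Not at h1
      linarith [this.1, this.2]
    · have := congrArg Subtype.val (gi hab)
      simp at this; exact this
  · rw [Path.trans_range]
    change range f ∪ range g = _
    rw [fr, gr]

lemma SameArcComponent.symm' {Y : Set α} {x y : α} (h : SameArcComponent Y x y) :
    SameArcComponent Y y x := by
  rcases h with rfl | ⟨A, hA, f, hf, fi, fr, f0, f1⟩
  · left; rfl
  · rw [← f0, ← f1]
    exact sameArc_sub f hf fi _ _ fun c _ => hA (fr ▸ mem_range_self c)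

lemma SameArcComponent.trans' [T2Space α] {Y : Set α} {x y z : α}
    (h : SameArcComponent Y x y) (h' : SameArcComponent Y y z) : SameArcComponent Y x z := by
  rcases h with rfl | ⟨A, hA, f, hf, fi, fr, f0, f1⟩
  · exact h'
  rcases h' with rfl | ⟨B, hB, g, hg, gi, gr, g0, g1⟩
  · exact Or.inr ⟨A, hA, f, hf, fi, fr, f0, f1⟩
  have hBc : IsClosed B := gr ▸ (isCompact_range hg).isClosed
  have hfA : ∀ c, f c ∈ Y := fun c => hA (fr ▸ mem_range_self c)
  have hgB : ∀ c, g c ∈ Y := fun c => hB (gr ▸ mem_range_self c)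
  have hK : IsCompact (f ⁻¹' B) := (hBc.preimage hf).isCompact
  obtain ⟨c, hc, hmin⟩ := hK.exists_isLeast ⟨⟨1, by norm_num⟩, by
    change f _ ∈ B
    rw [f1, ← g0, ← gr]; exact mem_range_self _⟩
  have hc' : f c ∈ range g := gr ▸ hc
  obtain ⟨d, hd⟩ := hc'
  by_cases hc0 : c = ⟨0, by norm_num⟩
  · have hx : x = g d := by rw [← f0, ← hc0, hd]
    rw [hx, ← g1]
    exact sameArc_sub g hg gi _ _ fun c _ => hgB c
  by_cases hd1 : d = ⟨1, by norm_num⟩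
  · have hz : z = f c := by rw [← g1, ← hd1, hd]
    rw [hz, ← f0]
    exact sameArc_sub f hf fi _ _ fun c _ => hfA c
  have a1 := isArc_sub f hf fi _ _ (Ne.symm hc0)
  have a2 := isArc_sub g hg gi _ _ hd1
  rw [hd] at a2
  rw [f0] at a1
  rw [g1] at a2
  refine Or.inr ⟨_, ?_, isArc_concat a1 a2 ?_⟩
  · rintro _ (⟨e, _, rfl⟩ | ⟨e, _, rfl⟩)
    · exact hfA e
    · exact hgB e
  · rintro _ ⟨⟨e, he, rfl⟩, ⟨e', he', h⟩⟩
    have h1 : c ≤ e := hmin (show f e ∈ B by rw [← h, ← gr]; exact mem_range_self _)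
    have h0 : (⟨0, by norm_num⟩ : I) ≤ c := c.2.1
    rw [uIcc_of_le h0] at he
    rw [le_antisymm he.2 h1]; rfl

lemma ramification_finite [T2Space α] {ι : Type*} [Finite ι] (p : α) (f : ι → I → α)
    (hf : ∀ i, Continuous (f i)) (h0 : ∀ i, f i 0 = p)
    (hi : ∀ i, Function.Injective (f i) ∨ ∀ c, f i c = p) :
    {x | IsRamificationPoint (⋃ i, range (f i)) x}.Finite := by
  classical
  set E := ⋃ i, range (f i) with hE
  have hfE : ∀ i c, f i c ∈ E := fun i c => mem_iUnion.2 ⟨i, mem_range_self c⟩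
  refine (((finite_range (fun ij : ι × ι => f ij.1 (sSup {c | f ij.1 c ∈ range (f ij.2)})))).union
    (finite_singleton p)).subset ?_
  intro x hx
  by_cases hxp : x = p
  · right; exact hxp
  left
  -- two points not in the class of `p`
  have main : ∀ v ∈ E \ {x}, ∀ w ∈ E \ {x}, ¬ SameArcComponent (E \ {x}) v w →
      ¬ SameArcComponent (E \ {x}) v p → ¬ SameArcComponent (E \ {x}) w p →
      x ∈ range (fun ij : ι × ι => f ij.1 (sSup {c | f ij.1 c ∈ range (f ij.2)})) := by
    have aux : ∀ v ∈ E \ {x}, ¬ SameArcComponent (E \ {x}) v p →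
        ∃ i a s, Function.Injective (f i) ∧ f i a = x ∧ f i s = v ∧ a < s := by
      intro v hv hvp
      obtain ⟨i, s, rfl⟩ := mem_iUnion.1 hv.1
      have inj : Function.Injective (f i) := (hi i).resolve_right
        fun h => hvp (Or.inl (h s))
      by_contra hcon
      apply hvp
      rw [← h0 i]
      refine sameArc_sub (f i) (hf i) inj _ _ fun c hc => ⟨hfE i c, ?_⟩
      intro hcx
      rw [uIcc_of_ge (show (0:I) ≤ s from s.2.1)] at hc
      rcases hc.2.eq_or_lt with h | h
      · exact hv.2 (h ▸ hcx)
      · exact hcon ⟨i, c, s, inj, hcx, rfl, h⟩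
    intro v hv w hw hvw hvp hwp
    obtain ⟨i, a, s, inji, hax, rfl, has⟩ := aux v hv hvp
    obtain ⟨j, b, r, injj, hbx, rfl, hbr⟩ := aux w hw hwp
    refine ⟨(i, j), ?_⟩
    have hl : IsGreatest {c | f i c ∈ range (f j)} a := by
      refine ⟨⟨b, hbx.trans hax.symm⟩, ?_⟩
      rintro c ⟨d, hd⟩
      by_contra hca
      push Not at hca
      have h1 : SameArcComponent (E \ {x}) (f i s) (f i c) := by
        refine sameArc_sub (f i) (hf i) inji _ _ fun e he => ⟨hfE i e, ?_⟩
        intro hex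
        have : e = a := inji (hex.trans hax.symm)
        subst this
        rw [mem_uIcc] at he
        rcases he with he | he
        · exact absurd he.1 (not_le.2 has)
        · exact absurd he.1 (not_le.2 hca)
      rw [← hd] at h1
      rcases lt_trichotomy d b with h | h | h
      · apply hvp
        refine h1.trans' ?_
        rw [← h0 j]
        refine sameArc_sub (f j) (hf j) injj _ _ fun e he => ⟨hfE j e, ?_⟩
        intro hex
        have : e = b := injj (hex.trans hbx.symm)
        subst this
        rw [uIcc_of_ge (show (0:I) ≤ d from d.2.1)] at he
        exact absurd he.2 (not_le.2 h)
      · subst h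
        have : a = c := inji (hax.trans (hbx.symm.trans hd))
        exact absurd this hca.ne
      · apply hvw
        refine h1.trans' ?_
        refine sameArc_sub (f j) (hf j) injj _ _ fun e he => ⟨hfE j e, ?_⟩
        intro hex
        have : e = b := injj (hex.trans hbx.symm)
        subst this
        rw [mem_uIcc] at he
        rcases he with he | he
        · exact absurd he.1 (not_le.2 h)
        · exact absurd he.1 (not_le.2 hbr)
    change f i (sSup {c | f i c ∈ range (f j)}) = x
    rw [hl.isLUB.sSup_eq, hax]
  obtain ⟨_, u, v, w, hu, hv, hw, huv, huw, hvw⟩ := hx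
  by_cases hup : SameArcComponent (E \ {x}) u p
  · exact main v hv w hw hvw (fun h => huv (hup.trans' h.symm')) (fun h => huw (hup.trans' h.symm'))
  by_cases hvp : SameArcComponent (E \ {x}) v p
  · exact main u hu w hw huw hup (fun h => hvw (hvp.trans' h.symm'))
  · exact main u hu v hv huv hup hvp

lemma locallyConnected_range {β : Type*} [TopologicalSpace β] [CompactSpace β]
    [LocallyConnectedSpace β] [T2Space α] (g : β → α) (hg : Continuous g) :
    LocallyConnectedSpace (range g) := by
  have hc : Continuous (rangeFactorization g) := hg.subtype_mk _
  have hq : Topology.IsQuotientMap (rangeFactorization g) :=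
    hc.isClosedMap.isQuotientMap hc rangeFactorization_surjective
  exact hq.isCoinducing.locallyConnectedSpace

lemma locallyConnected_I : LocallyConnectedSpace I := by
  have hq : Topology.IsQuotientMap (projIcc (0:ℝ) 1 zero_le_one) := isQuotientMap_projIcc
  exact hq.isCoinducing.locallyConnectedSpace

lemma halfCircle_isConnected (m : ℝ) (hm : m ^ 2 = 1) :
    IsConnected {z : unitCircle | 0 ≤ m * z.1 1} := by
  have hmem : ∀ θ : ℝ, (!₂[Real.cos θ, m * Real.sin θ] : EuclideanSpace ℝ (Fin 2)) ∈ unitCircle := by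
    intro θ
    rw [unitCircle, mem_sphere_zero_iff_norm, EuclideanSpace.norm_eq]
    simp [mul_pow, hm]
  let φ : ℝ → unitCircle := fun θ => ⟨!₂[Real.cos θ, m * Real.sin θ], hmem θ⟩
  have hφ : Continuous φ := by
    refine Continuous.subtype_mk ?_ _
    refine (PiLp.continuous_toLp 2 _).comp ?_
    refine continuous_pi fun i => ?_
    fin_cases i
    · exact Real.continuous_cos
    · exact continuous_const.mul Real.continuous_sin
  have : {z : unitCircle | 0 ≤ m * z.1 1} = φ '' Icc 0 Real.pi := by
    ext z
    constructor
    · intro hz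
      have hz2 : ‖z.1‖ = 1 := mem_sphere_zero_iff_norm.1 z.2
      rw [EuclideanSpace.norm_eq, Real.sqrt_eq_one] at hz2
      simp only [Real.norm_eq_abs, sq_abs, Fin.sum_univ_two] at hz2
      refine ⟨Real.arccos (z.1 0), ⟨Real.arccos_nonneg _, Real.arccos_le_pi _⟩, ?_⟩
      have hs : Real.sin (Real.arccos (z.1 0)) = m * z.1 1 := by
        rw [Real.sin_arccos, Real.sqrt_eq_iff_mul_self_eq (by nlinarith) hz]
        linear_combination -(z.1 1) ^ 2 * hm - hz2
      apply Subtype.ext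
      ext i
      fin_cases i
      · change Real.cos (Real.arccos (z.1 0)) = z.1 0
        rw [Real.cos_arccos] <;> nlinarith
      · change m * Real.sin (Real.arccos (z.1 0)) = z.1 1
        rw [hs]
        linear_combination (z.1 1) * hm
    · rintro ⟨θ, hθ, rfl⟩
      change 0 ≤ m * (m * Real.sin θ)
      have := Real.sin_nonneg_of_mem_Icc hθ
      have h2 : m * (m * Real.sin θ) = Real.sin θ := by linear_combination Real.sin θ * hm
      rw [h2]; exact this
  rw [this]
  exact (isConnected_Icc Real.pi_pos.le).image _ hφ.continuousOn

lemma no_circle [T2Space α] {D S : Set α} (hD : HereditarilyUnicoherent D) (hS : S ⊆ D) :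
    IsEmpty (↥S ≃ₜ ↥unitCircle) := by
  refine ⟨fun h => ?_⟩
  have hcc : CompactSpace unitCircle := isCompact_iff_compactSpace.1 (isCompact_sphere _ _)
  let k : unitCircle → α := fun z => (h.symm z).1
  have hk : Continuous k := continuous_subtype_val.comp h.symm.continuous
  have hki : Function.Injective k := Subtype.val_injective.comp h.symm.injective
  have hc1 : Continuous fun z : unitCircle => z.1 1 := by fun_prop
  have hc0 : Continuous fun z : unitCircle => z.1 0 := by fun_prop
  have hkr : range k = S := by
    ext y
    constructor
    · rintro ⟨z, rfl⟩; exact (h.symm z).2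
    · intro hy; exact ⟨h ⟨y, hy⟩, by simp [k]⟩
  set U := {z : unitCircle | 0 ≤ (1:ℝ) * z.1 1} with hU
  set V := {z : unitCircle | 0 ≤ (-1:ℝ) * z.1 1} with hV
  have cU : IsConnected U := halfCircle_isConnected 1 (by norm_num)
  have cV : IsConnected V := halfCircle_isConnected (-1) (by norm_num)
  have clU : IsClosed U := isClosed_le continuous_const (continuous_const.mul hc1)
  have clV : IsClosed V := isClosed_le continuous_const (continuous_const.mul hc1)
  have hUV : U ∪ V = univ := by
    ext z
    simp only [hU, hV, mem_union, mem_ofPred_eq, mem_univ, iff_true]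
    rcases le_total 0 (z.1 1) with h | h
    · left; linarith
    · right; linarith
  have cU' := cU.image k hk.continuousOn
  have cV' := cV.image k hk.continuousOn
  have hun : k '' U ∪ k '' V = S := by rw [← image_union, hUV, image_univ, hkr]
  have hne : (U ∩ V).Nonempty := by
    refine ⟨⟨!₂[1, 0], ?_⟩, ?_, ?_⟩
    · rw [unitCircle, mem_sphere_zero_iff_norm, EuclideanSpace.norm_eq]; simp
    · simp [hU]
    · simp [hV]
  have hScont : IsContinuum S := by
    refine ⟨hkr ▸ isCompact_range hk, ?_⟩
    rw [← hun]
    obtain ⟨z, hz⟩ := hne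
    exact IsConnected.union ⟨k z, mem_image_of_mem k hz.1, mem_image_of_mem k hz.2⟩ cU' cV'
  have hint := hD S hS hScont (k '' U) (k '' V) (hun ▸ subset_union_left)
    (hun ▸ subset_union_right) (clU.isCompact.image hk).isClosed
    (clV.isCompact.image hk).isClosed cU' cV' hun
  rw [← image_inter hki] at hint
  have hemb : Topology.IsInducing k := (hk.isClosedEmbedding hki).isInducing
  have hint2 : IsPreconnected (U ∩ V) := hemb.isPreconnected_image.1 hint.isPreconnected
  have hint3 := hint2.image _ hc0.continuousOn
  have m1 : (1:ℝ) ∈ (fun z : unitCircle => z.1 0) '' (U ∩ V) := by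
    refine ⟨⟨!₂[1, 0], ?_⟩, ⟨?_, ?_⟩, ?_⟩
    · rw [unitCircle, mem_sphere_zero_iff_norm, EuclideanSpace.norm_eq]; simp
    · simp [hU]
    · simp [hV]
    · simp
  have m2 : (-1:ℝ) ∈ (fun z : unitCircle => z.1 0) '' (U ∩ V) := by
    refine ⟨⟨!₂[-1, 0], ?_⟩, ⟨?_, ?_⟩, ?_⟩
    · rw [unitCircle, mem_sphere_zero_iff_norm, EuclideanSpace.norm_eq]; simp
    · simp [hU]
    · simp [hV]
    · simp
  obtain ⟨z, ⟨hzU, hzV⟩, hz⟩ := hint3.Icc_subset m2 m1 (show (0:ℝ) ∈ Icc (-1) 1 by norm_num)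
  have hz2 : ‖z.1‖ = 1 := mem_sphere_zero_iff_norm.1 z.2
  rw [EuclideanSpace.norm_eq, Real.sqrt_eq_one] at hz2
  simp only [Real.norm_eq_abs, sq_abs, Fin.sum_univ_two] at hz2
  simp only [hU, hV, mem_ofPred_eq] at hzU hzV hz
  have : z.1 1 = 0 := by linarith
  rw [hz, this] at hz2
  norm_num at hz2

end Helpers

theorem dendroid_star_includes_tree (n : ℕ) (D : Set (EuclideanSpace ℝ (Fin n)))
    (hD : IsDendroid D) (ε : ℝ) (hε : 0 < ε) :
    ∃ E : Set (EuclideanSpace ℝ (Fin n)), IsTreeContinuum E ∧ E ⊆ D ∧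
      Metric.hausdorffDist E D < ε := by
  classical
  obtain ⟨⟨hDc, hDconn⟩, hDarc, hDu⟩ := hD
  obtain ⟨p, hp⟩ := hDconn.nonempty
  have hfun : ∀ q : D, ∃ f : unitInterval → EuclideanSpace ℝ (Fin n), Continuous f ∧ f 0 = p ∧
      f 1 = q.1 ∧ (∀ c, f c ∈ D) ∧ (Function.Injective f ∨ ∀ c, f c = p) := by
    intro q
    by_cases hpq : p = q.1
    · exact ⟨fun _ => p, continuous_const, rfl, hpq, fun _ => hp, Or.inr fun _ => rfl⟩
    · obtain ⟨A, hA, f, hf, fi, fr, f0, f1⟩ := hDarc p hp q.1 q.2 hpq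
      exact ⟨f, hf, f0, f1, fun c => hA (fr ▸ mem_range_self c), Or.inl fi⟩
  choose F Fc F0 F1 FD Fi using hfun
  obtain ⟨t, htD, htfin, hcov⟩ := hDc.finite_cover_balls (half_pos hε)
  let ι := {q : D // q.1 ∈ t}
  have hfinι : Finite ι := by
    have : Finite t := htfin
    exact Finite.of_injective (fun q : ι => (⟨q.1.1, q.2⟩ : t)) (by
      intro a b hab
      exact Subtype.ext (Subtype.ext (Subtype.mk.inj hab)))
  have hneι : Nonempty ι := by
    obtain ⟨y, hy, _⟩ := mem_iUnion₂.1 (hcov hp)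
    exact ⟨⟨⟨y, htD hy⟩, hy⟩⟩
  let f : ι → unitInterval → EuclideanSpace ℝ (Fin n) := fun i => F i.1
  have hED : (⋃ i, range (f i)) ⊆ D := by
    refine iUnion_subset fun i => ?_
    rintro _ ⟨c, rfl⟩
    exact FD i.1 c
  refine ⟨⋃ i, range (f i), ⟨⟨⟨?_, ?_⟩, ?_, ?_⟩, ?_⟩, hED, ?_⟩
  · exact isCompact_iUnion fun i => isCompact_range (Fc i.1)
  · refine ⟨?_, ?_⟩
    · obtain ⟨i⟩ := hneι
      exact ⟨f i 0, mem_iUnion.2 ⟨i, mem_range_self _⟩⟩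
    · exact isPreconnected_iUnion ⟨p, mem_iInter.2 fun i => ⟨0, F0 i.1⟩⟩
        fun i => isPreconnected_range (Fc i.1)
  · let τ : TopologicalSpace ι := ⊥
    have hτ : DiscreteTopology ι := ⟨rfl⟩
    have := locallyConnected_I
    have hr : (⋃ i, range (f i)) = range (fun x : ι × unitInterval => f x.1 x.2) := by
      ext y; simp
    rw [hr]
    refine locallyConnected_range _ ?_
    exact continuous_prod_of_discrete_left.2 fun i => Fc i.1
  · exact fun S hS => no_circle hDu (hS.trans hED)
  · exact ramification_finite p f (fun i => Fc i.1) (fun i => F0 i.1) (fun i => Fi i.1)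
  · refine lt_of_le_of_lt (hausdorffDist_le_of_mem_dist (half_pos hε).le ?_ ?_) (half_lt_self hε)
    · intro x hx
      exact ⟨x, hED hx, by rw [dist_self]; exact (half_pos hε).le⟩
    · intro x hx
      obtain ⟨y, hy, hxy⟩ := mem_iUnion₂.1 (hcov hx)
      exact ⟨y, mem_iUnion.2 ⟨⟨⟨y, htD hy⟩, hy⟩, 1, F1 _⟩, (mem_ball.1 hxy).le⟩
end

section
/- There exists a computable closed set D ⊆ ℝ² which is a dendrite and which does not *-include a Π⁰₁ tree: there is a real ε > 0 such that every Π⁰₁ closed set T ⊆ D which is a tree (as a continuum) satisfies d_H(T, D) ≥ ε. -/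
open Set Metric

section RatComp

open Encodable

/-- The auxiliary (non-surjective) encoding of rationals. -/
def eQ (q : ℚ) : ℕ := @Encodable.encode ℚ Rat.instEncodable q

lemma intEquivNat_nonneg (n : ℕ) : Equiv.intEquivNat (n : ℤ) = 2 * n := rfl
lemma intEquivNat_neg (n : ℕ) : Equiv.intEquivNat (Int.negSucc n) = 2 * n + 1 := rfl

lemma eQ_eq (q : ℚ) : eQ q = Nat.pair (Equiv.intEquivNat q.num) q.den := rfl

/-- positive part of the integer with code `e` -/
def ipos (e : ℕ) : ℕ := if e % 2 = 1 then 0 else e / 2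
/-- negative part of the integer with code `e` -/
def ineg (e : ℕ) : ℕ := if e % 2 = 1 then e / 2 + 1 else 0

lemma ipos_spec (z : ℤ) : (ipos (Equiv.intEquivNat z) : ℤ) - ineg (Equiv.intEquivNat z) = z := by
  cases z with
  | ofNat n =>
    have := intEquivNat_nonneg n
    simp only [Int.ofNat_eq_natCast, this, ipos, ineg]
    simp
  | negSucc n =>
    rw [intEquivNat_neg]
    have h1 : ((2 * n + 1) % 2 = 1) := by omega
    have h2 : ((2 * n + 1) / 2 = n) := by omega
    simp [ipos, ineg, h1, h2, Int.negSucc_eq]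

lemma ipos_add_ineg (z : ℤ) :
    ipos (Equiv.intEquivNat z) + ineg (Equiv.intEquivNat z) = z.natAbs := by
  cases z with
  | ofNat n =>
    have := intEquivNat_nonneg n
    simp only [Int.ofNat_eq_natCast, this, ipos, ineg]
    simp
  | negSucc n =>
    rw [intEquivNat_neg]
    have h1 : ((2 * n + 1) % 2 = 1) := by omega
    have h2 : ((2 * n + 1) / 2 = n) := by omega
    simp [ipos, ineg, h1, h2]

lemma ipos_primrec : Primrec ipos :=
  Primrec.ite (Primrec.eq.comp (Primrec.nat_mod.comp .id (.const 2)) (.const 1)) (.const 0)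
    (Primrec.nat_div.comp .id (.const 2))
lemma ineg_primrec : Primrec ineg :=
  Primrec.ite (Primrec.eq.comp (Primrec.nat_mod.comp .id (.const 2)) (.const 1))
    (Primrec.succ.comp (Primrec.nat_div.comp .id (.const 2))) (.const 0)

lemma mem_range_eQ (m : ℕ) : m ∈ Set.range eQ ↔
    0 < m.unpair.2 ∧ ∀ d < m.unpair.2 + 1, (d = 1 ∨
      ¬ ((ipos m.unpair.1 + ineg m.unpair.1) % d = 0 ∧ m.unpair.2 % d = 0)) := by
  constructor
  · rintro ⟨q, rfl⟩
    rw [eQ_eq, Nat.unpair_pair]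
    refine ⟨q.den_pos, fun d _ => ?_⟩
    simp only [ipos_add_ineg]
    by_contra h
    push Not at h
    obtain ⟨h1, h2, h3⟩ := h
    exact h1 (Nat.eq_one_of_dvd_coprimes q.reduced (Nat.dvd_of_mod_eq_zero h2)
      (Nat.dvd_of_mod_eq_zero h3))
  · rintro ⟨h0, h⟩
    set z := Equiv.intEquivNat.symm m.unpair.1 with hz
    have hz' : Equiv.intEquivNat z = m.unpair.1 := by simp [hz]
    have hc : z.natAbs.Coprime m.unpair.2 := by
      rw [← ipos_add_ineg, hz']
      set a := ipos m.unpair.1 + ineg m.unpair.1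
      have hle : Nat.gcd a m.unpair.2 ≤ m.unpair.2 := Nat.gcd_le_right _ h0
      rcases h (Nat.gcd a m.unpair.2) (by omega) with h | h
      · exact h
      · exact absurd ⟨Nat.mod_eq_zero_of_dvd (Nat.gcd_dvd_left _ _),
          Nat.mod_eq_zero_of_dvd (Nat.gcd_dvd_right _ _)⟩ h
    refine ⟨⟨z, m.unpair.2, h0.ne', hc⟩, ?_⟩
    rw [eQ_eq]
    simp [hz']

lemma range_eQ_primrec : PrimrecPred (fun m => m ∈ Set.range eQ) := by
  have hd : PrimrecRel (fun (d : ℕ) (x : ℕ × ℕ) => d = 1 ∨ ¬ (x.1 % d = 0 ∧ x.2 % d = 0)) := by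
    refine PrimrecPred.or (Primrec.eq.comp .fst (.const 1)) (PrimrecPred.not (PrimrecPred.and ?_ ?_))
    · exact Primrec.eq.comp (Primrec.nat_mod.comp (Primrec.fst.comp .snd) .fst) (.const 0)
    · exact Primrec.eq.comp (Primrec.nat_mod.comp (Primrec.snd.comp .snd) .fst) (.const 0)
  have h1 : Primrec (fun m : ℕ => m.unpair.1) := Primrec.fst.comp .unpair
  have h2 : Primrec (fun m : ℕ => m.unpair.2) := Primrec.snd.comp .unpair
  refine PrimrecPred.of_eq (PrimrecPred.and (Primrec.nat_lt.comp (.const 0) h2)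
    (hd.forall_mem_list.comp (Primrec.list_range.comp (Primrec.succ.comp h2)) (Primrec.pair (Primrec.nat_add.comp
      (ipos_primrec.comp h1) (ineg_primrec.comp h1)) h2))) ?_
  intro m
  rw [mem_range_eQ]
  simp only [List.mem_range, Nat.succ_eq_add_one]

lemma eQ_ofNat_succ (n : ℕ) : ∃ h : ∃ m, eQ (Denumerable.ofNat ℚ n) + m + 1 ∈ Set.range eQ,
    ∀ [DecidablePred fun m => eQ (Denumerable.ofNat ℚ n) + m + 1 ∈ Set.range eQ],
    eQ (Denumerable.ofNat ℚ (n+1)) = eQ (Denumerable.ofNat ℚ n) + Nat.find h + 1 := by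
  let : Encodable ℚ := Rat.instEncodable
  let := @decidableRangeEncode ℚ _
  let : Infinite (Set.range (@encode ℚ _)) :=
    Infinite.of_injective _ (Equiv.ofInjective _ encode_injective).injective
  have key : ∀ n, eQ (Denumerable.ofNat ℚ n) =
      (Nat.Subtype.ofNat (Set.range (@encode ℚ _)) n : ℕ) := by
    intro n
    let := Nat.Subtype.denumerable (Set.range (@encode ℚ _))
    have h1 : Denumerable.ofNat ℚ n = (equivRangeEncode ℚ).symm
        (Denumerable.ofNat (Set.range (@encode ℚ _)) n) := Denumerable.ofEquiv_ofNat _ _ n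
    have h2 : Denumerable.ofNat (Set.range (@encode ℚ _)) n =
        Nat.Subtype.ofNat (Set.range (@encode ℚ _)) n := Denumerable.ofEquiv_ofNat ℕ _ n
    rw [h1, h2]
    have := (equivRangeEncode ℚ).apply_symm_apply (Nat.Subtype.ofNat (Set.range (@encode ℚ _)) n)
    exact congrArg Subtype.val this
  have hex := Nat.Subtype.exists_succ (Nat.Subtype.ofNat (Set.range (@encode ℚ _)) n)
  rw [← key n] at hex
  refine ⟨hex, ?_⟩
  intro _
  have h3 : (Nat.Subtype.ofNat (Set.range (@encode ℚ _)) (n+1) : ℕ) =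
    Nat.Subtype.succ (Nat.Subtype.ofNat (Set.range (@encode ℚ _)) n) := rfl
  rw [key, h3]
  unfold Nat.Subtype.succ
  simp only
  congr 1
  have hkn := key n
  congr 1
  · exact (key n).symm
  · apply Nat.find_congr'
    intro m
    rw [hkn]
    rfl

lemma eQ_infinite (x : ℕ) : ∃ m, x + m + 1 ∈ Set.range eQ := by
  have hinj : Function.Injective eQ := @encode_injective ℚ Rat.instEncodable
  have : (Set.range eQ).Infinite := Set.infinite_range_of_injective hinj
  obtain ⟨b, hb, hxb⟩ := this.exists_gt x
  exact ⟨b - x - 1, by rwa [show x + (b - x - 1) + 1 = b by omega]⟩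

lemma eQ_computable : Computable eQ := by
  classical
  have hfind : Computable (fun x => Nat.find (eQ_infinite x)) := by
    refine Computable.find (P := fun x m => x + m + 1 ∈ Set.range eQ) ?_ eQ_infinite
    have : PrimrecPred (fun p : ℕ × ℕ => p.1 + p.2 + 1 ∈ Set.range eQ) :=
      range_eQ_primrec.comp (Primrec.succ.comp Primrec.nat_add)
    exact this.computablePred
  have hG : Computable (fun n => eQ (Denumerable.ofNat ℚ n)) := by
    have hstep : Computable (fun x => x + Nat.find (eQ_infinite x) + 1) :=
      Computable.succ.comp (Primrec.nat_add.to_comp.comp .id hfind)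
    have := Computable.nat_rec (f := fun n : ℕ => n) (g := fun _ => eQ (Denumerable.ofNat ℚ 0))
      (h := fun _ p => p.2 + Nat.find (eQ_infinite p.2) + 1) Computable.id (.const _)
      (hstep.comp (Computable.snd.comp .snd))
    refine this.of_eq fun n => ?_
    induction n with
    | zero => rfl
    | succ n ih =>
      obtain ⟨h, h'⟩ := eQ_ofNat_succ n
      rw [h']
      simp only at ih ⊢
      congr 2
      · congr! 2
        rw [ih]
  refine (hG.comp Computable.encode).of_eq fun q => ?_
  rw [Denumerable.ofNat_encode]

/-- positive numerator part -/
def rp (q : ℚ) : ℕ := ipos (eQ q).unpair.1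
/-- negative numerator part -/
def rm (q : ℚ) : ℕ := ineg (eQ q).unpair.1

lemma rp_computable : Computable rp :=
  ipos_primrec.to_comp.comp (Computable.fst.comp (Computable.unpair.comp eQ_computable))
lemma rm_computable : Computable rm :=
  ineg_primrec.to_comp.comp (Computable.fst.comp (Computable.unpair.comp eQ_computable))
lemma den_computable : Computable (fun q : ℚ => q.den) :=
  (Computable.snd.comp (Computable.unpair.comp eQ_computable)).of_eq fun q => by
    rw [eQ_eq, Nat.unpair_pair]

lemma rat_eq (q : ℚ) : q = ((rp q : ℚ) - rm q) / q.den := by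
  conv_lhs => rw [← Rat.num_div_den q]
  congr 1
  have := ipos_spec q.num
  unfold rp rm
  rw [eQ_eq, Nat.unpair_pair]
  exact_mod_cast this.symm

variable {α : Type*} [Primcodable α]

lemma computable_of_graph {f : α → ℚ} {P : α → ℚ → Bool} (hP : Computable₂ P)
    (h : ∀ a q, P a q = true ↔ f a = q) : Computable f := by
  have hex : ∀ a : α, ∃ n : ℕ, P a (Denumerable.ofNat ℚ n) = true := fun a =>
    ⟨@encode ℚ Rat.instDenumerable.toEncodable (f a), by rw [h, Denumerable.ofNat_encode]⟩
  have h2 : Computable (fun a => Nat.find (hex a)) := by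
    refine Computable.find (P := fun a n => P a (Denumerable.ofNat ℚ n) = true) ?_ hex
    refine Computable.computablePred ?_
    refine (hP.comp Computable.fst ((Computable.ofNat ℚ).comp Computable.snd)).of_eq ?_
    intro p; simp
  refine ((Computable.ofNat ℚ).comp h2).of_eq fun a => ?_
  exact ((h _ _).1 (Nat.find_spec (hex a))).symm

lemma cadd {f g : α → ℕ} (hf : Computable f) (hg : Computable g) :
    Computable (fun a => f a + g a) := Primrec.nat_add.to_comp.comp hf hg
lemma cmul {f g : α → ℕ} (hf : Computable f) (hg : Computable g) :
    Computable (fun a => f a * g a) := Primrec.nat_mul.to_comp.comp hf hg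
lemma ceq {f g : α → ℕ} (hf : Computable f) (hg : Computable g) :
    Computable (fun a => decide (f a = g a)) := Primrec.eq.decide.to_comp.comp hf hg
lemma clt {f g : α → ℕ} (hf : Computable f) (hg : Computable g) :
    Computable (fun a => decide (f a < g a)) := Primrec.nat_lt.decide.to_comp.comp hf hg

lemma crp {f : α → ℚ} (hf : Computable f) : Computable (fun a => rp (f a)) := rp_computable.comp hf
lemma crm {f : α → ℚ} (hf : Computable f) : Computable (fun a => rm (f a)) := rm_computable.comp hf
lemma cden {f : α → ℚ} (hf : Computable f) : Computable (fun a => (f a).den) :=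
  den_computable.comp hf

lemma cRatLt {f g : α → ℚ} (hf : Computable f) (hg : Computable g) :
    Computable (fun a => decide (f a < g a)) := by
  refine (clt (cadd (cmul (crp hf) (cden hg)) (cmul (crm hg) (cden hf)))
    (cadd (cmul (crp hg) (cden hf)) (cmul (crm hf) (cden hg)))).of_eq fun a => ?_
  rw [decide_eq_decide]
  have h1 := rat_eq (f a)
  have h2 := rat_eq (g a)
  have d1 : (0:ℚ) < (f a).den := by exact_mod_cast (f a).den_pos
  have d2 : (0:ℚ) < (g a).den := by exact_mod_cast (g a).den_pos
  rw [← Nat.cast_lt (α := ℚ)]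
  generalize f a = x at *
  generalize g a = y at *
  push_cast
  conv_rhs => rw [h1, h2]
  rw [div_lt_div_iff₀ d1 d2]
  constructor <;> intro h <;> nlinarith

lemma cRatAdd {f g : α → ℚ} (hf : Computable f) (hg : Computable g) :
    Computable (fun a => f a + g a) := by
  have hf' : Computable (fun p : α × ℚ => f p.1) := hf.comp .fst
  have hg' : Computable (fun p : α × ℚ => g p.1) := hg.comp .fst
  have hq : Computable (fun p : α × ℚ => p.2) := .snd
  refine computable_of_graph (P := fun a q => decide
    (((rp (f a) * (g a).den + rp (g a) * (f a).den) * q.den + rm q * ((f a).den * (g a).den)) =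
    ((rm (f a) * (g a).den + rm (g a) * (f a).den) * q.den + rp q * ((f a).den * (g a).den))))
    (Computable₂.mk (ceq
    (cadd (cmul (cadd (cmul (crp hf') (cden hg')) (cmul (crp hg') (cden hf'))) (cden hq))
      (cmul (crm hq) (cmul (cden hf') (cden hg'))))
    (cadd (cmul (cadd (cmul (crm hf') (cden hg')) (cmul (crm hg') (cden hf'))) (cden hq))
      (cmul (crp hq) (cmul (cden hf') (cden hg')))))) ?_
  intro a q
  rw [decide_eq_true_eq]
  have h1 := rat_eq (f a)
  have h2 := rat_eq (g a)
  have h3 := rat_eq q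
  have d1 : (0:ℚ) < (f a).den := by exact_mod_cast (f a).den_pos
  have d2 : (0:ℚ) < (g a).den := by exact_mod_cast (g a).den_pos
  have d3 : (0:ℚ) < q.den := by exact_mod_cast q.den_pos
  rw [← Nat.cast_inj (R := ℚ)]
  generalize f a = x at *
  generalize g a = y at *
  push_cast
  conv_rhs => rw [h1, h2, h3]
  rw [div_add_div _ _ d1.ne' d2.ne', div_eq_div_iff (by positivity) (by positivity)]
  constructor <;> intro h <;> linarith

lemma cRatMul {f g : α → ℚ} (hf : Computable f) (hg : Computable g) :
    Computable (fun a => f a * g a) := by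
  have hf' : Computable (fun p : α × ℚ => f p.1) := hf.comp .fst
  have hg' : Computable (fun p : α × ℚ => g p.1) := hg.comp .fst
  have hq : Computable (fun p : α × ℚ => p.2) := .snd
  refine computable_of_graph (P := fun a q => decide
    (((rp (f a) * rp (g a) + rm (f a) * rm (g a)) * q.den + rm q * ((f a).den * (g a).den)) =
    ((rp (f a) * rm (g a) + rm (f a) * rp (g a)) * q.den + rp q * ((f a).den * (g a).den))))
    (Computable₂.mk (ceq
    (cadd (cmul (cadd (cmul (crp hf') (crp hg')) (cmul (crm hf') (crm hg'))) (cden hq))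
      (cmul (crm hq) (cmul (cden hf') (cden hg'))))
    (cadd (cmul (cadd (cmul (crp hf') (crm hg')) (cmul (crm hf') (crp hg'))) (cden hq))
      (cmul (crp hq) (cmul (cden hf') (cden hg')))))) ?_
  intro a q
  rw [decide_eq_true_eq]
  have h1 := rat_eq (f a)
  have h2 := rat_eq (g a)
  have h3 := rat_eq q
  have d1 : (0:ℚ) < (f a).den := by exact_mod_cast (f a).den_pos
  have d2 : (0:ℚ) < (g a).den := by exact_mod_cast (g a).den_pos
  have d3 : (0:ℚ) < q.den := by exact_mod_cast q.den_pos
  rw [← Nat.cast_inj (R := ℚ)]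
  generalize f a = x at *
  generalize g a = y at *
  push_cast
  conv_rhs => rw [h1, h2, h3]
  rw [div_mul_div_comm, div_eq_div_iff (by positivity) (by positivity)]
  constructor <;> intro h <;> linarith

lemma cRatNeg {f : α → ℚ} (hf : Computable f) : Computable (fun a => - f a) :=
  (cRatMul (.const (-1)) hf).of_eq fun a => by ring

lemma cRatSub {f g : α → ℚ} (hf : Computable f) (hg : Computable g) :
    Computable (fun a => f a - g a) :=
  (cRatAdd hf (cRatNeg hg)).of_eq fun a => by ring

lemma cRatMax {f g : α → ℚ} (hf : Computable f) (hg : Computable g) :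
    Computable (fun a => max (f a) (g a)) :=
  (Computable.cond (cRatLt hf hg) hg hf).of_eq fun a => by
    rcases lt_or_ge (f a) (g a) with h | h
    · simp [h, h.le]
    · simp [h, not_lt.2 h]

lemma cRatMin {f g : α → ℚ} (hf : Computable f) (hg : Computable g) :
    Computable (fun a => min (f a) (g a)) :=
  (Computable.cond (cRatLt hf hg) hf hg).of_eq fun a => by
    rcases lt_or_ge (f a) (g a) with h | h
    · simp [h, h.le]
    · simp [h, not_lt.2 h]

lemma cRatAbs {f : α → ℚ} (hf : Computable f) : Computable (fun a => |f a|) :=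
  (cRatMax hf (cRatNeg hf)).of_eq fun _ => rfl

lemma cRatPow (c : ℚ) {k : α → ℕ} (hk : Computable k) : Computable (fun a => c ^ k a) := by
  have := Computable.nat_rec (f := k) (g := fun _ => (1:ℚ)) (h := fun _ p => c * p.2) hk (.const _)
    (cRatMul (.const c) (Computable.snd.comp .snd))
  refine this.of_eq fun a => ?_
  dsimp only
  induction k a with
  | zero => simp
  | succ n ih => simp only [ih]; ring

lemma cRatNat {k : α → ℕ} (hk : Computable k) : Computable (fun a => (k a : ℚ)) := by
  have := Computable.nat_rec (f := k) (g := fun _ => (0:ℚ)) (h := fun _ p => p.2 + 1) hk (.const _)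
    (cRatAdd (Computable.snd.comp .snd) (.const 1))
  refine this.of_eq fun a => ?_
  dsimp only
  induction k a with
  | zero => simp
  | succ n ih => simp only [ih]; push_cast; ring

lemma cRatSum {k : α → ℕ} {f : α → ℕ → ℚ} (hk : Computable k) (hf : Computable₂ f) :
    Computable (fun a => ∑ i ∈ Finset.range (k a), f a i) := by
  have := Computable.nat_rec (f := k) (g := fun _ => (0:ℚ)) (h := fun a p => p.2 + f a p.1) hk
    (.const _) (cRatAdd (Computable.snd.comp .snd)
      (hf.comp Computable.fst (Computable.fst.comp .snd)))
  refine this.of_eq fun a => ?_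
  dsimp only
  induction k a with
  | zero => simp
  | succ n ih => simp only [ih]; rw [Finset.sum_range_succ]

lemma cBall {k : α → ℕ} {P : α → ℕ → Bool} (hk : Computable k) (hP : Computable₂ P) :
    ∃ Q : α → Bool, Computable Q ∧ ∀ a, Q a = true ↔ ∀ i < k a, P a i = true := by
  have := Computable.nat_rec (f := k) (g := fun _ => true) (h := fun a p => p.2 && P a p.1) hk
    (.const _) (Primrec.and.to_comp.comp (Computable.snd.comp .snd)
      (hP.comp Computable.fst (Computable.fst.comp .snd)))
  refine ⟨_, this, fun a => ?_⟩
  dsimp only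
  induction k a with
  | zero => simp
  | succ n ih =>
    simp only [Bool.and_eq_true, ih]
    constructor
    · rintro ⟨h1, h2⟩ i hi
      rcases Nat.lt_succ_iff_lt_or_eq.1 hi with h | rfl
      · exact h1 i h
      · exact h2
    · intro h
      exact ⟨fun i hi => h i (by omega), h n (by omega)⟩

lemma rePred_exists {P : α → ℕ → Bool} (hP : Computable₂ P) :
    REPred (fun a => ∃ n, P a n = true) := by
  have h : Partrec (fun a => Nat.rfind fun n => Part.some (P a n)) := Partrec.rfind hP.partrec
  refine h.dom_re.of_eq fun a => ?_
  refine Nat.rfind_dom.trans ?_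
  constructor
  · rintro ⟨n, hn, -⟩
    exact ⟨n, (Part.mem_some_iff.1 hn).symm⟩
  · rintro ⟨n, hn⟩
    exact ⟨n, Part.mem_some_iff.2 hn.symm, fun _ => trivial⟩

lemma rePred_enum {p : α → Prop} (hp : REPred p) :
    ∃ R : α → ℕ → Bool, Computable₂ R ∧ ∀ a, p a ↔ ∃ k, R a k = true := by
  obtain ⟨c, hc⟩ := Nat.Partrec.Code.exists_code.1 hp
  refine ⟨fun a k => (Nat.Partrec.Code.evaln k c (encode a)).isSome, ?_, ?_⟩
  · have h := Nat.Partrec.Code.primrec_evaln.to_comp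
    refine Computable₂.mk (Primrec.option_isSome.to_comp.comp (h.comp (Computable.pair
      (Computable.pair Computable.snd (Computable.const c)) (Computable.encode.comp .fst))))
  · intro a
    have h1 : p a ↔ (Nat.Partrec.Code.eval c (encode a)).Dom := by
      rw [hc]; simp [Part.assert]
    rw [h1, Part.dom_iff_mem]
    simp only [Nat.Partrec.Code.evaln_complete, Option.isSome_iff_exists]
    exact exists_comm

end RatComp
section General

/-- rational sup-distance -/
def qdist (p q : ℚ × ℚ) : ℚ := max |p.1 - q.1| |p.2 - q.2|

/-- cast of a rational point -/
def castPt (p : ℚ × ℚ) : ℝ × ℝ := ((p.1 : ℝ), (p.2 : ℝ))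

lemma qdist_cast (p q : ℚ × ℚ) : ((qdist p q : ℚ) : ℝ) = dist (castPt p) (castPt q) := by
  simp only [qdist, castPt, Prod.dist_eq, Real.dist_eq]
  push_cast
  rfl

lemma mem_ballOfCode (x : ℝ × ℝ) (c : (ℚ × ℚ) × ℚ) :
    x ∈ ballOfCode c ↔ dist x (castPt c.1) < (c.2 : ℝ) := Iff.rfl

lemma cQdist {α : Type*} [Primcodable α] {f g : α → ℚ × ℚ} (hf : Computable f)
    (hg : Computable g) : Computable (fun a => qdist (f a) (g a)) :=
  cRatMax (cRatAbs (cRatSub (Computable.fst.comp hf) (Computable.fst.comp hg)))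
    (cRatAbs (cRatSub (Computable.snd.comp hf) (Computable.snd.comp hg)))

lemma exists_small (δ : ℝ) (hδ : 0 < δ) : ∃ s : ℕ, 10 * (1/2 : ℝ) ^ s < δ := by
  obtain ⟨s, hs⟩ := exists_pow_lt_of_lt_one (show 0 < δ / 10 by positivity)
    (show (1/2 : ℝ) < 1 by norm_num)
  exact ⟨s, by linarith⟩

lemma isComputableClosed_of_approx (D : Set (ℝ × ℝ)) (hD : IsClosed D) (hne : D.Nonempty)
    (N : ℕ → ℕ) (hN : Computable N)
    (Q : ℕ → ℕ → ℚ × ℚ) (hQ : Computable₂ Q)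
    (hA : ∀ s, ∀ i < N s, ∃ x ∈ D, dist x (castPt (Q s i)) ≤ 10 * (1/2 : ℝ) ^ s)
    (hB : ∀ s, ∀ x ∈ D, ∃ i < N s, dist x (castPt (Q s i)) ≤ 10 * (1/2 : ℝ) ^ s) :
    IsComputableClosed D := by
  constructor
  · -- Pi01
    have hP : Computable₂ (fun (a : ((ℚ × ℚ) × ℚ) × ℕ) (i : ℕ) =>
        !decide (qdist (Q a.2 i) a.1.1 < a.1.2 + 10 * (1/2 : ℚ) ^ a.2)) := by
      have h1 : Computable (fun p : (((ℚ × ℚ) × ℚ) × ℕ) × ℕ => Q p.1.2 p.2) :=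
        hQ.comp (Computable.snd.comp .fst) .snd
      have h2 : Computable (fun p : (((ℚ × ℚ) × ℚ) × ℕ) × ℕ => p.1.1.1) :=
        Computable.fst.comp (Computable.fst.comp .fst)
      have h3 : Computable (fun p : (((ℚ × ℚ) × ℚ) × ℕ) × ℕ => p.1.1.2) :=
        Computable.snd.comp (Computable.fst.comp .fst)
      have h4 : Computable (fun p : (((ℚ × ℚ) × ℚ) × ℕ) × ℕ => p.1.2) :=
        Computable.snd.comp .fst
      exact Computable₂.mk (Primrec.not.to_comp.comp (cRatLt (cQdist h1 h2)
        (cRatAdd h3 (cRatMul (.const 10) (cRatPow (1/2) h4)))))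
    obtain ⟨R, hR, hR'⟩ := cBall (k := fun a : ((ℚ × ℚ) × ℚ) × ℕ => N a.2)
      (hN.comp .snd) hP
    have hRE := rePred_exists (P := fun (c : (ℚ × ℚ) × ℚ) (s : ℕ) => R (c, s)) hR
    refine ⟨_, hRE, ?_⟩
    have hW : ∀ c s, R (c, s) = true ↔
        ∀ i < N s, (c.2 : ℝ) + 10 * (1/2 : ℝ) ^ s ≤ dist (castPt (Q s i)) (castPt c.1) := by
      intro c s
      rw [hR']
      refine forall₂_congr fun i _ => ?_
      rw [Bool.not_eq_true', decide_eq_false_iff_not, not_lt, ← Rat.cast_le (K := ℝ), qdist_cast]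
      push_cast
      rfl
    ext x
    simp only [Set.mem_sdiff, Set.mem_univ, true_and, Set.mem_iUnion, not_exists, Set.mem_ofPred_eq]
    constructor
    · rintro hx c ⟨s, hs⟩ hxc
      rw [mem_ballOfCode] at hxc
      obtain ⟨i, hi, hxi⟩ := hB s x hx
      have h1 := (hW c s).1 hs i hi
      have h2 := dist_triangle_left (castPt (Q s i)) (castPt c.1) x
      linarith
    · intro h
      by_contra hx
      have hpos : 0 < Metric.infDist x D := (hD.notMem_iff_infDist_pos hne).1 hx
      set ρ := Metric.infDist x D with hρ
      obtain ⟨s, hs⟩ := exists_small (ρ/4) (by positivity)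
      obtain ⟨r, hr1, hr2⟩ := exists_rat_btwn (show (0:ℝ) < ρ/4 by positivity)
      obtain ⟨q1, h11, h12⟩ := exists_rat_btwn (show x.1 < x.1 + r by linarith)
      obtain ⟨q2, h21, h22⟩ := exists_rat_btwn (show x.2 < x.2 + r by linarith)
      have hxq : dist x (castPt (q1, q2)) < r := by
        rw [Prod.dist_eq, Real.dist_eq, Real.dist_eq]
        refine max_lt ?_ ?_ <;> (simp only [castPt]; rw [abs_lt]; constructor <;> linarith)
      refine h ((q1, q2), r) ⟨s, (hW _ _).2 fun i hi => ?_⟩ hxq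
      obtain ⟨y, hy, hyi⟩ := hA s i hi
      have h1 : ρ ≤ dist x y := Metric.infDist_le_dist_of_mem hy
      have h2 := dist_triangle4 x (castPt (q1, q2)) (castPt (Q s i)) y
      rw [dist_comm (castPt (q1, q2)) (castPt (Q s i)), dist_comm (castPt (Q s i)) y] at h2
      simp only
      linarith
  · -- c.e. closed
    have hP : Computable₂ (fun (c : (ℚ × ℚ) × ℚ) (n : ℕ) =>
        decide (n.unpair.2 < N n.unpair.1) &&
        decide (qdist (Q n.unpair.1 n.unpair.2) c.1 + 10 * (1/2 : ℚ) ^ n.unpair.1 < c.2)) := by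
      have hs : Computable (fun p : ((ℚ × ℚ) × ℚ) × ℕ => p.2.unpair.1) :=
        Computable.fst.comp (Computable.unpair.comp .snd)
      have hi : Computable (fun p : ((ℚ × ℚ) × ℚ) × ℕ => p.2.unpair.2) :=
        Computable.snd.comp (Computable.unpair.comp .snd)
      exact Computable₂.mk (Primrec.and.to_comp.comp (clt hi (hN.comp hs))
        (cRatLt (cRatAdd (cQdist (hQ.comp hs hi) (Computable.fst.comp .fst))
          (cRatMul (.const 10) (cRatPow (1/2) hs))) (Computable.snd.comp .fst)))
    refine (rePred_exists hP).of_eq fun c => ?_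
    have hW : ∀ s i, (qdist (Q s i) c.1 + 10 * (1/2 : ℚ) ^ s < c.2) ↔
        dist (castPt (Q s i)) (castPt c.1) + 10 * (1/2 : ℝ) ^ s < c.2 := by
      intro s i
      rw [← Rat.cast_lt (K := ℝ), ← qdist_cast]
      push_cast
      rfl
    constructor
    · rintro ⟨n, hn⟩
      rw [Bool.and_eq_true, decide_eq_true_eq, decide_eq_true_eq, hW] at hn
      obtain ⟨x, hx, hxd⟩ := hA _ _ hn.1
      refine ⟨x, hx, ?_⟩
      rw [mem_ballOfCode]
      have := dist_triangle x (castPt (Q n.unpair.1 n.unpair.2)) (castPt c.1)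
      linarith [hn.2]
    · rintro ⟨x, hx, hxc⟩
      rw [mem_ballOfCode] at hxc
      obtain ⟨s, hs⟩ := exists_small (((c.2 : ℝ) - dist x (castPt c.1))/2) (by linarith)
      obtain ⟨i, hi, hxi⟩ := hB s x hx
      refine ⟨Nat.pair s i, ?_⟩
      rw [Bool.and_eq_true, decide_eq_true_eq, decide_eq_true_eq, hW]
      simp only [Nat.unpair_pair]
      refine ⟨hi, ?_⟩
      have := dist_triangle_left (castPt (Q s i)) (castPt c.1) x
      linarith

end General
section Fns

/-- clamp to the unit interval -/
def kap {K : Type*} [Field K] [LinearOrder K] (v : K) : K := max 0 (min 1 v)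

/-- local coordinate on tile `n` -/
def uu {K : Type*} [Field K] (n : ℕ) (t : K) : K := 2 ^ (n + 2) * t - 3

/-- horizontal increment on tile `n` -/
def Fx {K : Type*} [Field K] [LinearOrder K] (n : ℕ) (a t : K) : K :=
  (1/2) ^ (n + 2) * ((1 - a) * kap (2 * uu n t + 2) + 2 * a * kap (uu n t + 1/2)
    + (1 - a) * kap (2 * uu n t - 1))

/-- tent on tile `n` -/
def Gx {K : Type*} [Field K] [LinearOrder K] (n : ℕ) (t : K) : K :=
  (1/2) ^ (n + 2) * (kap (2 * uu n t + 1) - kap (2 * uu n t))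

lemma kap_cast (v : ℚ) : ((kap v : ℚ) : ℝ) = kap (v : ℝ) := by
  simp [kap]

lemma Fx_cast (n : ℕ) (a t : ℚ) : ((Fx n a t : ℚ) : ℝ) = Fx n (a : ℝ) (t : ℝ) := by
  simp [Fx, uu, kap_cast]

lemma Gx_cast (n : ℕ) (t : ℚ) : ((Gx n t : ℚ) : ℝ) = Gx n (t : ℝ) := by
  simp [Gx, uu, kap_cast]

lemma kap_nonneg (v : ℝ) : 0 ≤ kap v := le_max_left _ _
lemma kap_le_one (v : ℝ) : kap v ≤ 1 := by simp [kap]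
lemma kap_mono {v w : ℝ} (h : v ≤ w) : kap v ≤ kap w := by
  unfold kap; gcongr
lemma kap_of_le {v : ℝ} (h : v ≤ 0) : kap v = 0 := by
  unfold kap; exact max_eq_left ((min_le_right _ _).trans h)
lemma kap_of_ge {v : ℝ} (h : 1 ≤ v) : kap v = 1 := by
  unfold kap; rw [min_eq_left h]; norm_num
lemma kap_of_mid {v : ℝ} (h0 : 0 ≤ v) (h : v ≤ 1) : kap v = v := by
  unfold kap; rw [min_eq_right h, max_eq_right h0]
lemma kap_cases (v : ℝ) : (v ≤ 0 ∧ kap v = 0) ∨ (0 ≤ v ∧ v ≤ 1 ∧ kap v = v) ∨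
    (1 ≤ v ∧ kap v = 1) := by
  rcases le_total v 0 with h | h
  · exact Or.inl ⟨h, kap_of_le h⟩
  · rcases le_total v 1 with h' | h'
    · exact Or.inr (Or.inl ⟨h, h', kap_of_mid h h'⟩)
    · exact Or.inr (Or.inr ⟨h', kap_of_ge h'⟩)
lemma kap_lip (v w : ℝ) : |kap v - kap w| ≤ |v - w| := by
  rcases kap_cases v with ⟨h1, e⟩ | ⟨h1, h2, e⟩ | ⟨h1, e⟩ <;>
  rcases kap_cases w with ⟨h3, e'⟩ | ⟨h3, h4, e'⟩ | ⟨h3, e'⟩ <;>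
  rw [e, e', abs_le] <;> constructor <;> 
  linarith [neg_abs_le (v - w), le_abs_self (v - w), abs_nonneg (v - w)]

lemma kap_continuous : Continuous (kap : ℝ → ℝ) := by
  unfold kap; fun_prop

/-- the width -/
noncomputable def ww (n : ℕ) : ℝ := (1/2) ^ (n + 2)
/-- the centre -/
noncomputable def xx (n : ℕ) : ℝ := 3 * (1/2) ^ (n + 2)

lemma ww_pos (n : ℕ) : 0 < ww n := by unfold ww; positivity
lemma ww_mul (n : ℕ) : ww n * 2 ^ (n + 2) = 1 := by
  unfold ww; rw [← mul_pow]; norm_num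
lemma uu_eq (n : ℕ) (t : ℝ) : t = ww n * (uu n t + 3) := by
  unfold uu; linear_combination (-t) * ww_mul n

lemma Fx_continuous (n : ℕ) (a : ℝ) : Continuous (Fx n a) := by
  unfold Fx uu
  have := kap_continuous
  fun_prop

lemma Gx_continuous (n : ℕ) : Continuous (Gx n : ℝ → ℝ) := by
  unfold Gx uu
  have := kap_continuous
  fun_prop

lemma uu_mono (n : ℕ) {s t : ℝ} (h : s ≤ t) : uu n s ≤ uu n t := by
  unfold uu; gcongr

lemma Fx_eq (n : ℕ) (a t : ℝ) : Fx n a t = ww n * ((1 - a) * kap (2 * uu n t + 2)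
    + 2 * a * kap (uu n t + 1/2) + (1 - a) * kap (2 * uu n t - 1)) := rfl
lemma Gx_eq (n : ℕ) (t : ℝ) : Gx n t = ww n * (kap (2 * uu n t + 1) - kap (2 * uu n t)) := rfl

lemma Fx_mono (n : ℕ) {a : ℝ} (h0 : 0 ≤ a) (h1 : a ≤ 1) : Monotone (Fx n a) := by
  intro s t h
  have hu := uu_mono n h
  have h1a : 0 ≤ 1 - a := by linarith
  have hw := (ww_pos n).le
  rw [Fx_eq, Fx_eq]
  have e1 := kap_mono (show 2 * uu n s + 2 ≤ 2 * uu n t + 2 by linarith)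
  have e2 := kap_mono (show uu n s + 1/2 ≤ uu n t + 1/2 by linarith)
  have e3 := kap_mono (show 2 * uu n s - 1 ≤ 2 * uu n t - 1 by linarith)
  gcongr

lemma Fx_nonneg (n : ℕ) {a : ℝ} (h0 : 0 ≤ a) (h1 : a ≤ 1) (t : ℝ) : 0 ≤ Fx n a t := by
  have h1a : 0 ≤ 1 - a := by linarith
  have hw := (ww_pos n).le
  rw [Fx_eq]
  have e1 := kap_nonneg (2 * uu n t + 2)
  have e2 := kap_nonneg (uu n t + 1/2)
  have e3 := kap_nonneg (2 * uu n t - 1)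
  positivity

lemma Fx_le (n : ℕ) {a : ℝ} (h0 : 0 ≤ a) (h1 : a ≤ 1) (t : ℝ) : Fx n a t ≤ 2 * ww n := by
  have h1a : 0 ≤ 1 - a := by linarith
  have hw := (ww_pos n).le
  rw [Fx_eq]
  have e1 := mul_le_mul_of_nonneg_left (kap_le_one (2 * uu n t + 2)) h1a
  have e2 := mul_le_mul_of_nonneg_left (kap_le_one (uu n t + 1/2)) (show 0 ≤ 2 * a by linarith)
  have e3 := mul_le_mul_of_nonneg_left (kap_le_one (2 * uu n t - 1)) h1a
  nlinarith

lemma Fx_left (n : ℕ) {a : ℝ} {t : ℝ} (h : uu n t ≤ -1) : Fx n a t = 0 := by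
  rw [Fx_eq, kap_of_le (by linarith), kap_of_le (by linarith), kap_of_le (by linarith)]; ring
lemma Fx_right (n : ℕ) {a : ℝ} {t : ℝ} (h : 1 ≤ uu n t) : Fx n a t = 2 * ww n := by
  rw [Fx_eq, kap_of_ge (by linarith), kap_of_ge (by linarith), kap_of_ge (by linarith)]; ring
lemma Gx_left (n : ℕ) {t : ℝ} (h : uu n t ≤ -1/2) : Gx n t = 0 := by
  rw [Gx_eq, kap_of_le (by linarith), kap_of_le (by linarith)]; ring
lemma Gx_right (n : ℕ) {t : ℝ} (h : 1/2 ≤ uu n t) : Gx n t = 0 := by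
  rw [Gx_eq, kap_of_ge (by linarith), kap_of_ge (by linarith)]; ring
lemma Gx_nonneg (n : ℕ) (t : ℝ) : 0 ≤ Gx n t := by
  rw [Gx_eq]
  exact mul_nonneg (ww_pos n).le (sub_nonneg.2 (kap_mono (by linarith)))
lemma Gx_le (n : ℕ) (t : ℝ) : Gx n t ≤ ww n := by
  rw [Gx_eq]
  have := kap_le_one (2 * uu n t + 1)
  have := kap_nonneg (2 * uu n t)
  have := ww_pos n
  nlinarith

lemma Fx_param (n : ℕ) (a b t : ℝ) : |Fx n a t - Fx n b t| ≤ 2 * ww n * |a - b| := by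
  have : Fx n a t - Fx n b t = ww n * ((2 * kap (uu n t + 1/2) - kap (2 * uu n t + 2) -
      kap (2 * uu n t - 1)) * (a - b)) := by
    rw [Fx_eq, Fx_eq]; ring
  rw [this, abs_mul, abs_mul, abs_of_pos (ww_pos n)]
  have h : |2 * kap (uu n t + 1/2) - kap (2 * uu n t + 2) - kap (2 * uu n t - 1)| ≤ 2 := by
    rw [abs_le]
    constructor <;> linarith [kap_nonneg (uu n t + 1/2), kap_nonneg (2 * uu n t + 2),
      kap_nonneg (2 * uu n t - 1), kap_le_one (uu n t + 1/2), kap_le_one (2 * uu n t + 2),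
      kap_le_one (2 * uu n t - 1)]
  have := ww_pos n
  have h2 := mul_le_mul_of_nonneg_right h (abs_nonneg (a - b))
  nlinarith

lemma uu_sub (n : ℕ) (s t : ℝ) : ww n * |uu n s - uu n t| = |s - t| := by
  rw [← abs_of_pos (ww_pos n), ← abs_mul]
  congr 1
  unfold uu
  linear_combination (s - t) * ww_mul n

lemma Fx_lip (n : ℕ) {a : ℝ} (h0 : 0 ≤ a) (h1 : a ≤ 1) (s t : ℝ) :
    |Fx n a s - Fx n a t| ≤ 4 * |s - t| := by
  have h1a : 0 ≤ 1 - a := by linarith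
  set d := |uu n s - uu n t| with hdd
  have e1 := kap_lip (2 * uu n s + 2) (2 * uu n t + 2)
  have e2 := kap_lip (uu n s + 1/2) (uu n t + 1/2)
  have e3 := kap_lip (2 * uu n s - 1) (2 * uu n t - 1)
  rw [show 2 * uu n s + 2 - (2 * uu n t + 2) = 2 * (uu n s - uu n t) by ring, abs_mul,
    ← hdd, abs_two] at e1
  rw [show uu n s + 1/2 - (uu n t + 1/2) = (uu n s - uu n t) by ring, ← hdd] at e2
  rw [show 2 * uu n s - 1 - (2 * uu n t - 1) = 2 * (uu n s - uu n t) by ring, abs_mul,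
    ← hdd, abs_two] at e3
  rw [← uu_sub n s t, ← hdd]
  have hw := ww_pos n
  rw [Fx_eq, Fx_eq, ← mul_sub, abs_mul, abs_of_pos hw]
  rw [show 4 * (ww n * d) = ww n * (4 * d) by ring]
  refine mul_le_mul_of_nonneg_left ?_ hw.le
  rw [abs_le] at *
  constructor <;> nlinarith

lemma Gx_lip (n : ℕ) (s t : ℝ) : |Gx n s - Gx n t| ≤ 4 * |s - t| := by
  set d := |uu n s - uu n t| with hdd
  have e1 := kap_lip (2 * uu n s + 1) (2 * uu n t + 1)
  have e3 := kap_lip (2 * uu n s) (2 * uu n t)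
  rw [show 2 * uu n s + 1 - (2 * uu n t + 1) = 2 * (uu n s - uu n t) by ring, abs_mul,
    ← hdd, abs_two] at e1
  rw [show 2 * uu n s - (2 * uu n t) = 2 * (uu n s - uu n t) by ring, abs_mul,
    ← hdd, abs_two] at e3
  rw [← uu_sub n s t, ← hdd]
  have hw := ww_pos n
  rw [Gx_eq, Gx_eq, ← mul_sub, abs_mul, abs_of_pos hw]
  rw [show 4 * (ww n * d) = ww n * (4 * d) by ring]
  refine mul_le_mul_of_nonneg_left ?_ hw.le
  rw [abs_le] at *
  constructor <;> linarith

end Fns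
section Curve

/-- rational approximations to the parameter -/
def aS (B : ℕ → ℕ → Bool) (n s : ℕ) : ℚ :=
  ∑ k ∈ Finset.range s, (if B n k then (1/2 : ℚ) ^ (k + 1) else 0)

/-- terms of the parameter -/
noncomputable def aT (B : ℕ → ℕ → Bool) (n k : ℕ) : ℝ := if B n k then (1/2 : ℝ) ^ (k + 1) else 0

/-- the parameter -/
noncomputable def aR (B : ℕ → ℕ → Bool) (n : ℕ) : ℝ := ∑' k, aT B n k

lemma aS_cast (B : ℕ → ℕ → Bool) (n s : ℕ) :
    ((aS B n s : ℚ) : ℝ) = ∑ k ∈ Finset.range s, aT B n k := by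
  unfold aS aT
  push_cast
  refine Finset.sum_congr rfl fun k _ => ?_
  split <;> simp

lemma hasSum_half (s : ℕ) : HasSum (fun k : ℕ => (1/2 : ℝ) ^ (k + s + 1)) ((1/2) ^ s) := by
  have h := hasSum_geometric_two.mul_left ((1/2 : ℝ) ^ (s + 1))
  have e : (1/2 : ℝ) ^ (s + 1) * 2 = (1/2) ^ s := by rw [pow_succ]; ring
  rw [e] at h
  refine h.congr_fun ?_ |> fun h => h
  intro k
  simp only [← pow_add]
  congr 1
  omega

lemma aT_nonneg (B : ℕ → ℕ → Bool) (n k : ℕ) : 0 ≤ aT B n k := by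
  unfold aT; split <;> positivity
lemma aT_le (B : ℕ → ℕ → Bool) (n k : ℕ) : aT B n k ≤ (1/2) ^ (k + 1) := by
  unfold aT; split
  · exact le_rfl
  · positivity
lemma aT_summable (B : ℕ → ℕ → Bool) (n : ℕ) : Summable (aT B n) :=
  Summable.of_nonneg_of_le (aT_nonneg B n) (aT_le B n) (hasSum_half 0).summable

lemma aR_nonneg (B : ℕ → ℕ → Bool) (n : ℕ) : 0 ≤ aR B n := tsum_nonneg (aT_nonneg B n)

lemma aS_nonneg (B : ℕ → ℕ → Bool) (n s : ℕ) : 0 ≤ ((aS B n s : ℚ) : ℝ) := by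
  rw [aS_cast]; exact Finset.sum_nonneg fun k _ => aT_nonneg B n k

lemma aR_sub (B : ℕ → ℕ → Bool) (n s : ℕ) :
    0 ≤ aR B n - aS B n s ∧ aR B n - aS B n s ≤ (1/2) ^ s := by
  have h := (aT_summable B n).sum_add_tsum_nat_add s
  rw [← aS_cast] at h
  have : aR B n - aS B n s = ∑' k, aT B n (k + s) := by
    unfold aR; linarith
  rw [this]
  refine ⟨tsum_nonneg fun k => aT_nonneg B n _, ?_⟩
  rw [← (hasSum_half s).tsum_eq]
  exact Summable.tsum_le_tsum (fun k => aT_le B n _)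
    ((summable_nat_add_iff s).2 (aT_summable B n)) (hasSum_half s).summable

lemma aR_le_one (B : ℕ → ℕ → Bool) (n : ℕ) : aR B n ≤ 1 := by
  have h := (aR_sub B n 0).2
  simpa [aS] using h

lemma aS_le_one (B : ℕ → ℕ → Bool) (n s : ℕ) : ((aS B n s : ℚ) : ℝ) ≤ 1 := by
  linarith [(aR_sub B n s).1, aR_le_one B n]

lemma aR_pos_iff (B : ℕ → ℕ → Bool) (n : ℕ) : 0 < aR B n ↔ ∃ k, B n k = true := by
  constructor
  · intro h
    by_contra! hk
    have : aR B n = 0 := by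
      unfold aR aT
      simp [hk]
    linarith
  · rintro ⟨k, hk⟩
    refine (aT_summable B n).tsum_pos (aT_nonneg B n) k ?_
    unfold aT
    rw [if_pos hk]; positivity

/-- horizontal coordinate -/
noncomputable def fF (B : ℕ → ℕ → Bool) (t : ℝ) : ℝ :=
  kap (t + 1) - 1 + ∑' n, Fx n (aR B n) t
/-- vertical coordinate -/
noncomputable def gG (t : ℝ) : ℝ := ∑' n, Gx n t

lemma two_ww (n : ℕ) : 2 * ww n = (1/2) ^ (n + 1) := by
  unfold ww; rw [pow_succ _ (n+1)]; ring

lemma ww_summable : Summable (fun n => 2 * ww n) := by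
  simp only [two_ww]
  exact (hasSum_half 0).summable

lemma fF_bound (B : ℕ → ℕ → Bool) (n : ℕ) (t : ℝ) : ‖Fx n (aR B n) t‖ ≤ 2 * ww n := by
  rw [Real.norm_eq_abs, abs_of_nonneg (Fx_nonneg n (aR_nonneg B n) (aR_le_one B n) t)]
  exact Fx_le n (aR_nonneg B n) (aR_le_one B n) t

lemma gG_bound (n : ℕ) (t : ℝ) : ‖Gx n t‖ ≤ 2 * ww n := by
  rw [Real.norm_eq_abs, abs_of_nonneg (Gx_nonneg n t)]
  linarith [Gx_le n t, ww_pos n]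

lemma fF_continuous (B : ℕ → ℕ → Bool) : Continuous (fF B) := by
  unfold fF
  have h := continuous_tsum (fun n => Fx_continuous n (aR B n)) ww_summable (fF_bound B)
  have := kap_continuous
  fun_prop

lemma gG_continuous : Continuous gG := by
  unfold gG
  exact continuous_tsum Gx_continuous ww_summable gG_bound

lemma fF_summable (B : ℕ → ℕ → Bool) (t : ℝ) : Summable (fun n => Fx n (aR B n) t) :=
  Summable.of_norm_bounded ww_summable (fun n => fF_bound B n t)
lemma gG_summable (t : ℝ) : Summable (fun n => Gx n t) :=
  Summable.of_norm_bounded ww_summable (fun n => gG_bound n t)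

lemma fF_mono (B : ℕ → ℕ → Bool) : Monotone (fF B) := by
  intro s t h
  unfold fF
  have h1 := kap_mono (show s + 1 ≤ t + 1 by linarith)
  have h2 := Summable.tsum_le_tsum
    (fun n => Fx_mono n (aR_nonneg B n) (aR_le_one B n) h) (fF_summable B s) (fF_summable B t)
  linarith

lemma gG_nonneg (t : ℝ) : 0 ≤ gG t := tsum_nonneg fun n => Gx_nonneg n t

/-- rational approximation of the horizontal coordinate -/
def fS (B : ℕ → ℕ → Bool) (s : ℕ) (t : ℚ) : ℚ :=
  kap (t + 1) - 1 + ∑ n ∈ Finset.range s, Fx n (aS B n s) t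
/-- rational approximation of the vertical coordinate -/
def gS (s : ℕ) (t : ℚ) : ℚ := ∑ n ∈ Finset.range s, Gx n t

lemma tail_le (s : ℕ) (h : ℕ → ℝ) (h0 : ∀ n, 0 ≤ h n) (hs : Summable h)
    (hb : ∀ n, h n ≤ 2 * ww n) :
    |∑' n, h n - ∑ n ∈ Finset.range s, h n| ≤ (1/2) ^ s := by
  have e := hs.sum_add_tsum_nat_add s
  have : ∑' n, h n - ∑ n ∈ Finset.range s, h n = ∑' k, h (k + s) := by linarith
  rw [this, abs_of_nonneg (tsum_nonneg fun k => h0 _), ← (hasSum_half s).tsum_eq]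
  refine Summable.tsum_le_tsum (fun k => ?_) ((summable_nat_add_iff s).2 hs)
    (hasSum_half s).summable
  rw [← two_ww]; exact hb _

lemma fS_err (B : ℕ → ℕ → Bool) (s : ℕ) (t : ℚ) :
    |fF B t - (fS B s t : ℚ)| ≤ 2 * (1/2) ^ s := by
  have h1 := tail_le s (fun n => Fx n (aR B n) t)
    (fun n => Fx_nonneg n (aR_nonneg B n) (aR_le_one B n) t) (fF_summable B t)
    (fun n => Fx_le n (aR_nonneg B n) (aR_le_one B n) t)
  have h2 : |∑ n ∈ Finset.range s, Fx n (aR B n) (t:ℝ) -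
      ∑ n ∈ Finset.range s, Fx n ((aS B n s : ℚ) : ℝ) (t:ℝ)| ≤ (1/2) ^ s := by
    rw [← Finset.sum_sub_distrib]
    refine (Finset.abs_sum_le_sum_abs _ _).trans ?_
    have : ∀ n ∈ Finset.range s, |Fx n (aR B n) (t:ℝ) - Fx n ((aS B n s : ℚ) : ℝ) (t:ℝ)| ≤
        2 * ww n * (1/2) ^ s := by
      intro n _
      refine (Fx_param n _ _ _).trans ?_
      have := aR_sub B n s
      have hw := ww_pos n
      rw [abs_of_nonneg this.1]
      exact mul_le_mul_of_nonneg_left this.2 (by linarith)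
    refine (Finset.sum_le_sum this).trans ?_
    rw [← Finset.sum_mul]
    have h3 : ∑ n ∈ Finset.range s, 2 * ww n ≤ 1 := by
      have := ww_summable.sum_le_tsum (Finset.range s) (fun n _ => by have := ww_pos n; positivity)
      refine this.trans ?_
      simp only [two_ww]
      have := (hasSum_half 0).tsum_eq
      simp only [add_zero, pow_zero] at this
      exact this.le
    have : (0:ℝ) ≤ (1/2) ^ s := by positivity
    nlinarith
  have e : fF B t - (fS B s t : ℚ) = (∑' n, Fx n (aR B n) (t:ℝ) -
      ∑ n ∈ Finset.range s, Fx n (aR B n) (t:ℝ)) + (∑ n ∈ Finset.range s, Fx n (aR B n) (t:ℝ) -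
      ∑ n ∈ Finset.range s, Fx n ((aS B n s : ℚ) : ℝ) (t:ℝ)) := by
    unfold fF fS
    push_cast [kap_cast, Fx_cast]
    ring
  rw [e]
  refine (abs_add_le _ _).trans ?_
  linarith

lemma gS_err (s : ℕ) (t : ℚ) : |gG t - (gS s t : ℚ)| ≤ (1/2) ^ s := by
  have h1 := tail_le s (fun n => Gx n (t:ℝ)) (fun n => Gx_nonneg n t) (gG_summable t)
    (fun n => by linarith [Gx_le n (t:ℝ), ww_pos n])
  unfold gG gS
  push_cast [Gx_cast]
  exact h1

lemma fin_lip (s : ℕ) (h : ℕ → ℝ → ℝ) (hl : ∀ n x y, |h n x - h n y| ≤ 4 * |x - y|) (x y : ℝ) :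
    |∑ n ∈ Finset.range s, h n x - ∑ n ∈ Finset.range s, h n y| ≤ 4 * s * |x - y| := by
  rw [← Finset.sum_sub_distrib]
  refine (Finset.abs_sum_le_sum_abs _ _).trans ?_
  refine (Finset.sum_le_sum fun n _ => hl n x y).trans ?_
  rw [Finset.sum_const, Finset.card_range, nsmul_eq_mul]
  linarith

lemma fF_near (B : ℕ → ℕ → Bool) (s : ℕ) (x y : ℝ) :
    |fF B x - fF B y| ≤ 2 * (1/2) ^ s + (4 * s + 1) * |x - y| := by
  have h1 := fun t => tail_le s (fun n => Fx n (aR B n) t)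
    (fun n => Fx_nonneg n (aR_nonneg B n) (aR_le_one B n) t) (fF_summable B t)
    (fun n => Fx_le n (aR_nonneg B n) (aR_le_one B n) t)
  have h2 := fin_lip s (fun n => Fx n (aR B n))
    (fun n x y => Fx_lip n (aR_nonneg B n) (aR_le_one B n) x y) x y
  have h3 := kap_lip (x + 1) (y + 1)
  rw [show x + 1 - (y + 1) = x - y by ring] at h3
  have hx := h1 x
  have hy := h1 y
  unfold fF
  rw [abs_le] at hx hy h2 h3 ⊢
  constructor <;> linarith

lemma gG_near (s : ℕ) (x y : ℝ) :
    |gG x - gG y| ≤ 2 * (1/2) ^ s + (4 * s + 1) * |x - y| := by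
  have h1 := fun t => tail_le s (fun n => Gx n t) (fun n => Gx_nonneg n t) (gG_summable t)
    (fun n => by linarith [Gx_le n t, ww_pos n])
  have h2 := fin_lip s Gx Gx_lip x y
  have hx := h1 x
  have hy := h1 y
  unfold gG
  have := abs_nonneg (x - y)
  rw [abs_le] at hx hy h2 ⊢
  constructor <;> linarith

/-- the dendrite -/
noncomputable def gam (B : ℕ → ℕ → Bool) (t : ℝ) : ℝ × ℝ := (fF B t, gG t)
/-- the dendrite -/
def DD (B : ℕ → ℕ → Bool) : Set (ℝ × ℝ) := gam B '' Icc (-1) 1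

lemma gam_continuous (B : ℕ → ℕ → Bool) : Continuous (gam B) :=
  (fF_continuous B).prodMk gG_continuous

/-- grid parameter -/
def tS (s i : ℕ) : ℚ := (i : ℚ) * (1/4) ^ s - 1

/-- grid points -/
def QQ (B : ℕ → ℕ → Bool) (s i : ℕ) : ℚ × ℚ := (fS B s (tS s i), gS s (tS s i))

lemma gam_grid (B : ℕ → ℕ → Bool) (s : ℕ) (t : ℚ) :
    dist (gam B t) (castPt (fS B s t, gS s t)) ≤ 2 * (1/2) ^ s := by
  rw [Prod.dist_eq, Real.dist_eq, Real.dist_eq]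
  refine max_le (fS_err B s t) ((gS_err s t).trans ?_)
  have : (0:ℝ) ≤ (1/2) ^ s := by positivity
  linarith

lemma s_bound (s : ℕ) : (4 * (s:ℝ) + 1) * (1/4) ^ s ≤ 4 * (1/2) ^ s := by
  have h : (s:ℝ) + 1 ≤ 2 ^ s := by exact_mod_cast Nat.lt_two_pow_self
  have e : (2:ℝ) ^ s * (1/4) ^ s = (1/2) ^ s := by rw [← mul_pow]; norm_num
  rw [← e]
  have : (0:ℝ) < (1/4) ^ s := by positivity
  have h2 : (4 * (s:ℝ) + 1) ≤ 4 * 2 ^ s := by linarith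
  nlinarith

lemma gam_near (B : ℕ → ℕ → Bool) (s : ℕ) (x y : ℝ) (h : |x - y| ≤ (1/4) ^ s) :
    dist (gam B x) (gam B y) ≤ 6 * (1/2) ^ s := by
  have h1 := s_bound s
  have h2 : (4 * (s:ℝ) + 1) * |x - y| ≤ (4 * (s:ℝ) + 1) * (1/4) ^ s :=
    mul_le_mul_of_nonneg_left h (by positivity)
  rw [Prod.dist_eq, Real.dist_eq, Real.dist_eq]
  refine max_le ((fF_near B s x y).trans ?_) ((gG_near s x y).trans ?_) <;> linarith

lemma tS_cast (s i : ℕ) : ((tS s i : ℚ) : ℝ) = i * (1/4) ^ s - 1 := by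
  unfold tS; push_cast; rfl

lemma DD_hA (B : ℕ → ℕ → Bool) (s i : ℕ) (hi : i < 2 * 4 ^ s + 1) :
    ∃ x ∈ DD B, dist x (castPt (QQ B s i)) ≤ 10*(1/2:ℝ)^s := by
  refine ⟨_, ⟨(tS s i : ℝ), ?_, rfl⟩, (gam_grid B s (tS s i)).trans ?_⟩
  · have e : (4:ℝ) ^ s * (1/4) ^ s = 1 := by rw [← mul_pow]; norm_num
    have : (0:ℝ) < (1/4) ^ s := by positivity
    have hi' : (i:ℝ) ≤ 2 * 4 ^ s := by exact_mod_cast Nat.lt_succ_iff.1 hi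
    have h0 : (0:ℝ) ≤ i := by positivity
    rw [tS_cast]
    constructor <;> nlinarith
  · have : (0:ℝ) ≤ (1/2) ^ s := by positivity
    linarith

lemma DD_hB (B : ℕ → ℕ → Bool) (s : ℕ) (x : ℝ × ℝ) (hx : x ∈ DD B) :
    ∃ i < 2 * 4 ^ s + 1, dist x (castPt (QQ B s i)) ≤ 10*(1/2:ℝ)^s := by
  obtain ⟨t, ⟨ht1, ht2⟩, rfl⟩ := hx
  have e : (4:ℝ) ^ s * (1/4) ^ s = 1 := by rw [← mul_pow]; norm_num
  have hp : (0:ℝ) < (1/4) ^ s := by positivity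
  have h4 : (0:ℝ) < 4 ^ s := by positivity
  have hnn : 0 ≤ (t + 1) * 4 ^ s := mul_nonneg (by linarith) h4.le
  have hf1 := Nat.floor_le hnn
  have hf2 := Nat.lt_floor_add_one ((t + 1) * 4 ^ s)
  set i := ⌊(t + 1) * 4 ^ s⌋₊ with hi
  refine ⟨i, ?_, ?_⟩
  · have : (i:ℝ) ≤ 2 * 4 ^ s := by nlinarith
    exact Nat.lt_succ_iff.2 (by exact_mod_cast this)
  · have hd : |t - (tS s i : ℚ)| ≤ (1/4) ^ s := by
      rw [tS_cast]
      have h1 := mul_le_mul_of_nonneg_right hf1 hp.le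
      have h2 := mul_le_mul_of_nonneg_right hf2.le hp.le
      rw [mul_assoc, e] at h1 h2
      rw [abs_le]; constructor <;> linarith
    have := dist_triangle (gam B t) (gam B (tS s i : ℚ)) (castPt (QQ B s i))
    have h1 := gam_near B s _ _ hd
    have h2 := gam_grid B s (tS s i)
    have : (0:ℝ) ≤ (1/2) ^ s := by positivity
    unfold QQ at *
    linarith

variable {α : Type*} [Primcodable α]

lemma cKap {f : α → ℚ} (hf : Computable f) : Computable (fun a => kap (f a)) :=
  cRatMax (.const 0) (cRatMin (.const 1) hf)

lemma cUu {n : α → ℕ} {t : α → ℚ} (hn : Computable n) (ht : Computable t) :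
    Computable (fun a => uu (n a) (t a)) :=
  cRatSub (cRatMul (cRatPow 2 (cadd hn (.const 2))) ht) (.const 3)

lemma cFx {n : α → ℕ} {b t : α → ℚ} (hn : Computable n) (hb : Computable b) (ht : Computable t) :
    Computable (fun a => Fx (n a) (b a) (t a)) := by
  have hu := cUu hn ht
  have h2 : Computable (fun a => 2 * uu (n a) (t a)) := cRatMul (.const 2) hu
  have h1b : Computable (fun a => 1 - b a) := cRatSub (.const 1) hb
  exact cRatMul (cRatPow (1/2) (cadd hn (.const 2)))
    (cRatAdd (cRatAdd (cRatMul h1b (cKap (cRatAdd h2 (.const 2))))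
      (cRatMul (cRatMul (.const 2) hb) (cKap (cRatAdd hu (.const (1/2))))))
      (cRatMul h1b (cKap (cRatSub h2 (.const 1)))))

lemma cGx {n : α → ℕ} {t : α → ℚ} (hn : Computable n) (ht : Computable t) :
    Computable (fun a => Gx (n a) (t a)) := by
  have hu := cUu hn ht
  have h2 : Computable (fun a => 2 * uu (n a) (t a)) := cRatMul (.const 2) hu
  exact cRatMul (cRatPow (1/2) (cadd hn (.const 2)))
    (cRatSub (cKap (cRatAdd h2 (.const 1))) (cKap h2))

lemma cAS {B : ℕ → ℕ → Bool} (hB : Computable₂ B) {n s : α → ℕ} (hn : Computable n)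
    (hs : Computable s) : Computable (fun a => aS B (n a) (s a)) := by
  refine cRatSum hs (f := fun a k => if B (n a) k then (1/2 : ℚ) ^ (k + 1) else 0) ?_
  have h := Computable.cond (hB.comp (hn.comp (Computable.fst (α := α) (β := ℕ))) .snd)
    (cRatPow (1/2) (cadd (Computable.snd (α := α) (β := ℕ)) (.const 1))) (.const 0)
  refine Computable₂.mk (h.of_eq fun p => ?_)
  cases B (n p.1) p.2 <;> simp

lemma cFS {B : ℕ → ℕ → Bool} (hB : Computable₂ B) {s : α → ℕ} {t : α → ℚ} (hs : Computable s)
    (ht : Computable t) : Computable (fun a => fS B (s a) (t a)) :=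
  cRatAdd (cRatSub (cKap (cRatAdd ht (.const 1))) (.const 1))
    (cRatSum hs (f := fun a n => Fx n (aS B n (s a)) (t a)) (Computable₂.mk
      (cFx .snd (cAS hB .snd (hs.comp .fst)) (ht.comp .fst))))

lemma cGS {s : α → ℕ} {t : α → ℚ} (hs : Computable s)
    (ht : Computable t) : Computable (fun a => gS (s a) (t a)) :=
  cRatSum hs (f := fun a n => Gx n (t a)) (Computable₂.mk (cGx .snd (ht.comp .fst)))

lemma cQQ {B : ℕ → ℕ → Bool} (hB : Computable₂ B) : Computable₂ (QQ B) := by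
  have ht : Computable (fun p : ℕ × ℕ => tS p.1 p.2) :=
    cRatSub (cRatMul (cRatNat .snd) (cRatPow (1/4) .fst)) (.const 1)
  exact Computable₂.mk (Computable.pair (cFS hB .fst ht) (cGS .fst ht))

lemma cNN : Computable (fun s : ℕ => 2 * 4 ^ s + 1) := by
  have h : Primrec (fun s : ℕ => 4 ^ s) := by
    have : Primrec (fun s : ℕ => Nat.rec (motive := fun _ => ℕ) 1 (fun _ r => r * 4) s) :=
      Primrec.nat_rec₁ 1 (Primrec.nat_mul.comp₂ Primrec₂.right (Primrec₂.const 4))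
    refine this.of_eq fun s => ?_
    induction s with
    | zero => rfl
    | succ k ih => rw [pow_succ, ← ih]
  exact cadd (cmul (.const 2) h.to_comp) (.const 1)

lemma DD_compact (B : ℕ → ℕ → Bool) : IsCompact (DD B) :=
  isCompact_Icc.image (gam_continuous B)

lemma DD_computable {B : ℕ → ℕ → Bool} (hB : Computable₂ B) : IsComputableClosed (DD B) :=
  isComputableClosed_of_approx (DD B) (DD_compact B).isClosed
    ⟨_, ⟨0, by norm_num, rfl⟩⟩ _ cNN (QQ B) (cQQ hB) (DD_hA B) (DD_hB B)

end Curve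
section Tile

lemma ww_lt {m n : ℕ} (h : m < n) : 2 * ww n ≤ ww m := by
  have : ww n ≤ ww (m + 1) := by
    unfold ww
    exact pow_le_pow_of_le_one (by norm_num) (by norm_num) (by omega)
  have e : 2 * ww (m + 1) = ww m := by rw [two_ww]; unfold ww; congr 1
  linarith

lemma uu_iff_le (n : ℕ) (t c : ℝ) : uu n t ≤ c ↔ t ≤ ww n * (c + 3) := by
  have h := uu_eq n t
  have hw := ww_pos n
  constructor
  · intro h1; rw [h]; gcongr
  · intro h1
    rw [h] at h1
    linarith [le_of_mul_le_mul_left h1 hw]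

lemma le_uu_iff (n : ℕ) (t c : ℝ) : c ≤ uu n t ↔ ww n * (c + 3) ≤ t := by
  have h := uu_eq n t
  have hw := ww_pos n
  constructor
  · intro h1; rw [h]; gcongr
  · intro h1
    rw [h] at h1
    linarith [le_of_mul_le_mul_left h1 hw]

lemma uu_left_of_lt {m n : ℕ} (h : m < n) {t : ℝ} (ht : uu n t ≤ 1) : uu m t ≤ -1 := by
  rw [uu_iff_le] at *
  have := ww_lt h
  linarith

lemma uu_right_of_lt {m n : ℕ} (h : n < m) {t : ℝ} (ht : -1 ≤ uu n t) : 1 ≤ uu m t := by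
  rw [le_uu_iff] at *
  have := ww_lt h
  linarith

lemma fF_tile (B : ℕ → ℕ → Bool) (n : ℕ) {t : ℝ} (h1 : -1 ≤ uu n t) (h2 : uu n t ≤ 1) :
    fF B t = 2 * ww n + Fx n (aR B n) t := by
  have hs := (fF_summable B t).sum_add_tsum_nat_add (n + 1)
  have ht0 : 0 ≤ t := by
    have := (le_uu_iff n t (-1)).1 h1
    have := ww_pos n
    linarith
  have e1 : ∑ i ∈ Finset.range (n + 1), Fx i (aR B i) t = Fx n (aR B n) t := by
    rw [Finset.sum_range_succ, Finset.sum_eq_zero, zero_add]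
    intro i hi
    exact Fx_left i (uu_left_of_lt (Finset.mem_range.1 hi) h2)
  have e2 : ∑' k, Fx (k + (n + 1)) (aR B (k + (n + 1))) t = 2 * ww n := by
    rw [two_ww, ← (hasSum_half (n + 1)).tsum_eq]
    refine tsum_congr fun k => ?_
    rw [Fx_right _ (uu_right_of_lt (by omega) h1), two_ww]
  unfold fF
  rw [← hs, e1, e2, kap_of_ge (by linarith)]
  ring

lemma gG_tile (n : ℕ) {t : ℝ} (h1 : -1 ≤ uu n t) (h2 : uu n t ≤ 1) : gG t = Gx n t := by
  unfold gG
  refine tsum_eq_single n fun m hm => ?_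
  rcases lt_or_gt_of_ne hm with h | h
  · exact Gx_left m (by linarith [uu_left_of_lt h h2])
  · exact Gx_right m (by linarith [uu_right_of_lt h h1])

lemma uu_at (n : ℕ) (c : ℝ) : uu n (ww n * (c + 3)) = c := by
  have := ww_mul n
  unfold uu
  linear_combination (c + 3) * this

lemma fF_left (B : ℕ → ℕ → Bool) (n : ℕ) : fF B (2 * ww n) = 2 * ww n := by
  have e : uu n (2 * ww n) = -1 := by
    have := uu_at n (-1)
    rwa [show ww n * (-1 + 3) = 2 * ww n by ring] at this
  rw [fF_tile B n (by linarith) (by linarith), Fx_left n e.le, add_zero]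

lemma fF_right (B : ℕ → ℕ → Bool) (n : ℕ) : fF B (4 * ww n) = 4 * ww n := by
  have e : uu n (4 * ww n) = 1 := by
    have := uu_at n 1
    rwa [show ww n * (1 + 3) = 4 * ww n by ring] at this
  rw [fF_tile B n (by linarith) (by linarith), Fx_right n e.ge]
  ring

lemma xx_eq (n : ℕ) : xx n = 3 * ww n := rfl

lemma mem_tile (B : ℕ → ℕ → Bool) (n : ℕ) {t : ℝ} (h : |fF B t - xx n| < ww n) :
    -1 ≤ uu n t ∧ uu n t ≤ 1 := by
  rw [abs_lt, xx_eq] at h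
  constructor
  · rw [le_uu_iff]
    by_contra! h1
    have := fF_mono B (show t ≤ 2 * ww n by linarith)
    rw [fF_left] at this
    linarith
  · rw [uu_iff_le]
    by_contra! h1
    have := fF_mono B (show 4 * ww n ≤ t by linarith)
    rw [fF_right] at this
    linarith

/-- the spike tip -/
noncomputable def pp (n : ℕ) : ℝ × ℝ := (xx n, ww n)

lemma gam_xx (B : ℕ → ℕ → Bool) (n : ℕ) : gam B (xx n) = pp n := by
  have e : uu n (xx n) = 0 := by
    have := uu_at n 0
    rwa [show ww n * (0 + 3) = xx n by rw [xx_eq]; ring] at this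
  unfold gam pp
  rw [fF_tile B n (by linarith) (by linarith), gG_tile n (by linarith) (by linarith), Fx_eq,
    Gx_eq, e, kap_of_ge (show (1:ℝ) ≤ 2 * 0 + 2 by norm_num),
    kap_of_ge (show (1:ℝ) ≤ 2 * 0 + 1 by norm_num),
    kap_of_le (show (2:ℝ) * 0 - 1 ≤ 0 by norm_num), kap_of_le (show (2:ℝ) * 0 ≤ 0 by norm_num),
    kap_of_mid (show (0:ℝ) ≤ 0 + 1/2 by norm_num) (by norm_num), xx_eq]
  ext <;> simp only <;> ring

lemma fF_inj_xx (B : ℕ → ℕ → Bool) (n : ℕ) (ha : 0 < aR B n) {t : ℝ} (h : fF B t = xx n) :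
    t = xx n := by
  have hw := ww_pos n
  obtain ⟨h1, h2⟩ := mem_tile B n (t := t) (by rw [h, sub_self, abs_zero]; exact hw)
  rw [fF_tile B n h1 h2, xx_eq, Fx_eq] at h
  have ha1 := aR_le_one B n
  set a := aR B n
  have h' : (1 - a) * kap (2 * uu n t + 2) + 2 * a * kap (uu n t + 1/2) +
      (1 - a) * kap (2 * uu n t - 1) = 1 := by
    have : ww n * ((1 - a) * kap (2 * uu n t + 2) + 2 * a * kap (uu n t + 1/2) +
      (1 - a) * kap (2 * uu n t - 1)) = ww n * 1 := by linarith
    exact mul_left_cancel₀ hw.ne' this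
  have key : uu n t = 0 := by
    rcases lt_trichotomy (uu n t) 0 with hu | hu | hu
    · exfalso
      rw [kap_of_le (v := 2 * uu n t - 1) (by linarith)] at h'
      have k1 := kap_le_one (2 * uu n t + 2)
      have k2 : kap (uu n t + 1/2) < 1/2 := by
        rcases kap_cases (uu n t + 1/2) with ⟨_, e⟩ | ⟨_, _, e⟩ | ⟨_, e⟩ <;> rw [e] <;> linarith
      nlinarith
    · exact hu
    · exfalso
      rw [kap_of_ge (v := 2 * uu n t + 2) (by linarith)] at h'
      have k1 := kap_nonneg (2 * uu n t - 1)
      have k2 : 1/2 < kap (uu n t + 1/2) := by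
        rcases kap_cases (uu n t + 1/2) with ⟨_, e⟩ | ⟨_, _, e⟩ | ⟨_, e⟩ <;> rw [e] <;> linarith
      nlinarith
  have := uu_eq n t
  rw [key] at this
  rw [this, xx_eq]; ring

lemma spike (B : ℕ → ℕ → Bool) (n : ℕ) (ha : aR B n = 0) {t : ℝ}
    (h : |fF B t - xx n| < ww n) : fF B t = xx n ∨ gG t = 0 := by
  obtain ⟨h1, h2⟩ := mem_tile B n h
  rw [gG_tile n h1 h2, fF_tile B n h1 h2]
  rcases le_total (uu n t) (-1/2) with hu | hu
  · exact Or.inr (Gx_left n hu)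
  rcases le_total (1/2) (uu n t) with hu' | hu'
  · exact Or.inr (Gx_right n hu')
  · left
    rw [Fx_eq, ha, kap_of_ge (v := 2 * uu n t + 2) (by linarith),
      kap_of_le (v := 2 * uu n t - 1) (by linarith), xx_eq]
    ring

lemma fF_neg_one (B : ℕ → ℕ → Bool) : fF B (-1) = -1 := by
  unfold fF
  have : ∀ n, Fx n (aR B n) (-1) = 0 := fun n => Fx_left n (by
    rw [uu_iff_le]; have := ww_pos n; linarith)
  simp only [this, tsum_zero]
  rw [kap_of_le (by norm_num)]; norm_num

lemma gG_neg_one : gG (-1) = 0 := by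
  unfold gG
  have : ∀ n, Gx n (-1 : ℝ) = 0 := fun n => Gx_left n (by
    rw [uu_iff_le]; have := ww_pos n; linarith)
  simp only [this, tsum_zero]

lemma fF_one (B : ℕ → ℕ → Bool) : fF B 1 = 1 := by
  have := fF_right B 0
  rwa [show 4 * ww 0 = 1 by unfold ww; norm_num] at this

lemma xx_le (n : ℕ) : xx n ≤ 3/4 := by
  have : ww n ≤ ww 0 := by
    unfold ww
    exact pow_le_pow_of_le_one (by norm_num) (by norm_num) (by omega)
  have e : ww 0 = 1/4 := by unfold ww; norm_num
  rw [xx_eq]; linarith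

lemma xx_inj {m n : ℕ} (h : xx m = xx n) : m = n := by
  rw [xx_eq, xx_eq] at h
  rcases lt_trichotomy m n with h1 | h1 | h1
  · have := ww_lt h1; have := ww_pos m; have := ww_pos n; linarith
  · exact h1
  · have := ww_lt h1; have := ww_pos m; have := ww_pos n; linarith

end Tile
section Dendrite

lemma circle_compl_preconnected (v : ↥unitCircle) : IsPreconnected ({v}ᶜ : Set ↥unitCircle) := by
  have hv : ‖(v : EuclideanSpace ℝ (Fin 2))‖ = 1 := norm_eq_of_mem_sphere v
  have h := range_stereographic_symm hv v.2
  have h2 := isPreconnected_range (isOpenEmbedding_stereographic_symm hv).continuous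
  rw [h] at h2
  exact h2

lemma circle_sub {S : Set (ℝ × ℝ)} (e : ↥S ≃ₜ ↥unitCircle) (s : ℝ × ℝ) (hs : s ∈ S) :
    IsPreconnected (S \ {s}) := by
  have h := (circle_compl_preconnected (e ⟨s, hs⟩)).image (fun v => ((e.symm v : ↥S) : ℝ × ℝ))
    (by fun_prop)
  convert! h using 1
  ext x
  constructor
  · rintro ⟨hx, hne⟩
    refine ⟨e ⟨x, hx⟩, ?_, by simp⟩
    simp only [mem_compl_iff, mem_singleton_iff, EmbeddingLike.apply_eq_iff_eq, Subtype.mk.injEq]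
    exact hne
  · rintro ⟨v, hv, rfl⟩
    refine ⟨(e.symm v).2, ?_⟩
    rintro (h : ((e.symm v : ↥S) : ℝ × ℝ) = s)
    apply hv
    have : e.symm v = ⟨s, hs⟩ := Subtype.ext h
    rw [mem_singleton_iff, ← this, e.apply_symm_apply]

lemma circle_preconnected {S : Set (ℝ × ℝ)} (e : ↥S ≃ₜ ↥unitCircle) : IsPreconnected S := by
  have h : IsPreconnected unitCircle := isPreconnected_sphere (by
    rw [← Module.finrank_eq_rank, finrank_euclideanSpace_fin]; norm_num) _ _
  have h' : PreconnectedSpace ↥unitCircle := Subtype.preconnectedSpace h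
  have := isPreconnected_range (f := fun v => ((e.symm v : ↥S) : ℝ × ℝ)) (by fun_prop)
  convert! this using 1
  ext x
  constructor
  · intro hx
    exact ⟨e ⟨x, hx⟩, by simp⟩
  · rintro ⟨v, rfl⟩
    exact (e.symm v).2

lemma circle_nontrivial {S : Set (ℝ × ℝ)} (e : ↥S ≃ₜ ↥unitCircle) :
    ∃ x ∈ S, ∃ y ∈ S, x ≠ y := by
  let v : EuclideanSpace ℝ (Fin 2) := EuclideanSpace.single 0 1
  have hv : v ∈ unitCircle := by simp [v, unitCircle]
  have hv' : -v ∈ unitCircle := by simp [v, unitCircle]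
  refine ⟨e.symm ⟨v, hv⟩, (e.symm ⟨v, hv⟩).2, e.symm ⟨-v, hv'⟩, (e.symm ⟨-v, hv'⟩).2, ?_⟩
  intro h
  have h1 := e.symm.injective (Subtype.ext h)
  have h2 : v = -v := congrArg Subtype.val h1
  have h3 := congrArg (fun w : EuclideanSpace ℝ (Fin 2) => w 0) h2
  simp only [v, PiLp.neg_apply, PiLp.single_apply, if_true] at h3
  norm_num at h3

lemma circle_two {S : Set (ℝ × ℝ)} (e : ↥S ≃ₜ ↥unitCircle) (h : ℝ × ℝ → ℝ) (hc : Continuous h)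
    {a b : ℝ × ℝ} (ha : a ∈ S) (hb : b ∈ S) {c : ℝ} (h1 : h a < c) (h2 : c < h b) :
    ∃ s ∈ S, ∃ s' ∈ S, s ≠ s' ∧ h s = c ∧ h s' = c := by
  obtain ⟨s, hs, hsc⟩ := (circle_preconnected e).intermediate_value ha hb hc.continuousOn
    ⟨h1.le, h2.le⟩
  have ha' : a ∈ S \ {s} := ⟨ha, fun h' => by rw [mem_singleton_iff.1 h'] at h1; linarith⟩
  have hb' : b ∈ S \ {s} := ⟨hb, fun h' => by rw [mem_singleton_iff.1 h'] at h2; linarith⟩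
  obtain ⟨s', hs', hsc'⟩ := (circle_sub e s hs).intermediate_value ha' hb' hc.continuousOn
    ⟨h1.le, h2.le⟩
  exact ⟨s, hs, s', hs'.1, fun h' => hs'.2 h'.symm, hsc, hsc'⟩

lemma DD_no_circle (B : ℕ → ℕ → Bool) (S : Set (ℝ × ℝ)) (hS : S ⊆ DD B)
    (e : ↥S ≃ₜ ↥unitCircle) : False := by
  have key : ∀ x ∈ S, ∀ y ∈ S, ¬ x.1 < y.1 := by
    intro x hx y hy hxy
    have hcount := (fF_mono B).countable_setOfPred_two_preimages
    have hd := hcount.dense_compl ℝ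
    obtain ⟨c, hc, hc1, hc2⟩ := hd.exists_between hxy
    obtain ⟨s, hs, s', hs', hne, e1, e2⟩ := circle_two e Prod.fst continuous_fst hx hy hc1 hc2
    obtain ⟨t, -, rfl⟩ := hS hs
    obtain ⟨t', -, rfl⟩ := hS hs'
    apply hc
    rcases lt_trichotomy t t' with h | h | h
    · exact ⟨t, t', h, e1, e2⟩
    · exact absurd (congrArg _ h) hne
    · exact ⟨t', t, h, e2, e1⟩
  have key2 : ∀ x ∈ S, ∀ y ∈ S, x.1 = y.1 := fun x hx y hy =>
    le_antisymm (not_lt.1 (key y hy x hx)) (not_lt.1 (key x hx y hy))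
  have key3 : ∀ x ∈ S, ∀ y ∈ S, ¬ x.2 < y.2 := by
    intro x hx y hy hxy
    obtain ⟨c, hc1, hc2⟩ := exists_between hxy
    obtain ⟨s, hs, s', hs', hne, e1, e2⟩ := circle_two e Prod.snd continuous_snd hx hy hc1 hc2
    exact hne (Prod.ext (key2 s hs s' hs') (e1.trans e2.symm))
  obtain ⟨x, hx, y, hy, hne⟩ := circle_nontrivial e
  exact hne (Prod.ext (key2 x hx y hy)
    (le_antisymm (not_lt.1 (key3 y hy x hx)) (not_lt.1 (key3 x hx y hy))))

lemma DD_dendrite (B : ℕ → ℕ → Bool) : IsDendrite (DD B) := by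
  refine ⟨⟨DD_compact B, ?_⟩, ?_, fun S hS => ⟨fun e => DD_no_circle B S hS e⟩⟩
  · exact (isConnected_Icc (by norm_num)).image _ (gam_continuous B).continuousOn
  · let φ : ↥(Icc (-1:ℝ) 1) → ↥(DD B) := fun t => ⟨gam B t, ⟨t, t.2, rfl⟩⟩
    have hφ : Continuous φ := by
      have := gam_continuous B
      fun_prop
    have hs : Function.Surjective φ := by
      rintro ⟨_, ⟨t, ht, rfl⟩⟩
      exact ⟨⟨t, ht⟩, rfl⟩
    have : LocallyConnectedSpace ↥(Icc (-1:ℝ) 1) :=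
      (isQuotientMap_projIcc (h := by norm_num)).isCoinducing.locallyConnectedSpace
    exact (hφ.isClosedMap.isQuotientMap hφ hs).isCoinducing.locallyConnectedSpace

end Dendrite
section Main

/-- the base of the spike -/
noncomputable def bb (n : ℕ) : ℝ × ℝ := (xx n, 0)

lemma sep (B : ℕ → ℕ → Bool) (n : ℕ) (ha : aR B n = 0) {C : Set (ℝ × ℝ)} (hC : C ⊆ DD B)
    (hb : bb n ∉ C) (hconn : IsPreconnected C) {a b : ℝ × ℝ} (haC : a ∈ C) (hbC : b ∈ C)
    (ha1 : a.1 = xx n) (hb1 : b.1 ≠ xx n) : False := by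
  have hU : IsOpen {x : ℝ × ℝ | 0 < x.2 ∧ |x.1 - xx n| < ww n} :=
    (isOpen_lt continuous_const continuous_snd).inter
      (isOpen_lt (f := fun x : ℝ × ℝ => |x.1 - xx n|) (by fun_prop) continuous_const)
  have hV : IsOpen {x : ℝ × ℝ | x.1 ≠ xx n} := isOpen_ne_fun continuous_fst continuous_const
  have hmem : ∀ x ∈ C, x.1 = xx n → x ∈ {x : ℝ × ℝ | 0 < x.2 ∧ |x.1 - xx n| < ww n} := by
    intro x hx h1
    obtain ⟨t, -, rfl⟩ := hC hx
    refine ⟨lt_of_le_of_ne (gG_nonneg t) fun h0 => hb ?_, ?_⟩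
    · have : gam B t = bb n := Prod.ext h1 h0.symm
      rwa [this] at hx
    · rw [h1, sub_self, abs_zero]; exact ww_pos n
  obtain ⟨x, hx, hxU, hxV⟩ := hconn _ _ hU hV (fun x hx => by
      by_cases h : x.1 = xx n
      · exact Or.inl (hmem x hx h)
      · exact Or.inr h) ⟨a, haC, hmem a haC ha1⟩ ⟨b, hbC, hb1⟩
  obtain ⟨t, -, rfl⟩ := hC hx
  rcases spike B n ha hxU.2 with h | h
  · exact hxV h
  · exact hxU.1.ne' h

lemma same_conn {Y : Set (ℝ × ℝ)} {x y : ℝ × ℝ} (hx : x ∈ Y) (h : SameArcComponent Y x y) :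
    ∃ C ⊆ Y, IsPreconnected C ∧ x ∈ C ∧ y ∈ C := by
  rcases h with rfl | ⟨A, hA, f, hf, -, rfl, rfl, rfl⟩
  · exact ⟨{x}, by simpa using hx, isPreconnected_singleton, rfl, rfl⟩
  · exact ⟨_, hA, isPreconnected_range hf, ⟨_, rfl⟩, ⟨_, rfl⟩⟩

lemma ramif (B : ℕ → ℕ → Bool) (n : ℕ) (ha : aR B n = 0) {T : Set (ℝ × ℝ)} (hT : T ⊆ DD B)
    (hconn : IsPreconnected T) {l r : ℝ × ℝ} (hl : l ∈ T) (hr : r ∈ T)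
    (hl1 : l.1 < xx n) (hr1 : xx n < r.1) (hp : pp n ∈ T) : IsRamificationPoint T (bb n) := by
  have hb : bb n ∈ T := by
    by_contra hb
    exact sep B n ha hT hb hconn hp hl rfl hl1.ne
  have hne : ∀ x : ℝ × ℝ, x ∈ T → x ≠ bb n → x ∈ T \ {bb n} := fun x h h' => ⟨h, h'⟩
  have hl' : l ∈ T \ {bb n} := hne l hl fun h => hl1.ne (congrArg Prod.fst h)
  have hr' : r ∈ T \ {bb n} := hne r hr fun h => hr1.ne' (congrArg Prod.fst h)
  have hp' : pp n ∈ T \ {bb n} := hne _ hp fun h => (ww_pos n).ne' (congrArg Prod.snd h)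
  have hsub : ∀ C ⊆ T \ {bb n}, C ⊆ DD B ∧ bb n ∉ C := fun C hC =>
    ⟨fun x hx => hT (hC hx).1, fun h => (hC h).2 rfl⟩
  refine ⟨hb, l, r, pp n, hl', hr', hp', ?_, ?_, ?_⟩
  · intro h
    obtain ⟨C, hC, hc, h1, h2⟩ := same_conn hl' h
    obtain ⟨s, hs, hs1⟩ := hc.intermediate_value h1 h2 continuous_fst.continuousOn
      ⟨hl1.le, hr1.le⟩
    exact sep B n ha (hsub C hC).1 (hsub C hC).2 hc hs h1 hs1 hl1.ne
  · intro h
    obtain ⟨C, hC, hc, h1, h2⟩ := same_conn hl' h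
    exact sep B n ha (hsub C hC).1 (hsub C hC).2 hc h2 h1 rfl hl1.ne
  · intro h
    obtain ⟨C, hC, hc, h1, h2⟩ := same_conn hr' h
    exact sep B n ha (hsub C hC).1 (hsub C hC).2 hc h2 h1 rfl hr1.ne'

/-- the halting stage predicate -/
def BB (n s : ℕ) : Bool :=
  (Nat.Partrec.Code.evaln s (Denumerable.ofNat Nat.Partrec.Code n.unpair.1) 0).isSome

lemma cBB : Computable₂ BB := by
  refine Computable₂.mk ?_
  have h1 : Primrec (fun p : ℕ × ℕ => Denumerable.ofNat Nat.Partrec.Code p.1.unpair.1) :=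
    (Primrec.ofNat _).comp (Primrec.fst.comp (Primrec.unpair.comp Primrec.fst))
  exact (Primrec.option_isSome.comp (Nat.Partrec.Code.primrec_evaln.comp
    ((Primrec.snd.pair h1).pair (Primrec.const 0)))).to_comp

lemma BB_iff (c : Nat.Partrec.Code) (N : ℕ) :
    (∃ k, BB (Nat.pair (Encodable.encode c) N) k = true) ↔ (c.eval 0).Dom := by
  simp only [BB, Nat.unpair_pair, Denumerable.ofNat_encode, Option.isSome_iff_exists]
  rw [Part.dom_iff_mem]
  simp only [Nat.Partrec.Code.evaln_complete, Option.mem_def]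
  exact exists_comm

/-- rational version of the spike tip -/
def ppQ (n : ℕ) : ℚ × ℚ := (3 * (1/2) ^ (n + 2), (1/2) ^ (n + 2))

lemma rePred_exists_code {α X : Type*} [Primcodable α] [Primcodable X] {P : α → X → ℕ → Bool}
    (hP : Computable (fun q : (α × X) × ℕ => P q.1.1 q.1.2 q.2)) :
    REPred (fun a => ∃ x k, P a x k = true) := by
  have h1 : Computable (fun q : (α × ℕ) × X => q.1.2.unpair.2) :=
    Computable.snd.comp (Computable.unpair.comp (Computable.snd.comp .fst))
  have h2 : Computable (fun q : (α × ℕ) × X => (q.1.1, q.2)) :=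
    Computable.pair (Computable.fst.comp .fst) .snd
  have h0 : Computable (fun q : (α × ℕ) × X => ((q.1.1, q.2), q.1.2.unpair.2)) :=
    Computable.pair h2 h1
  have h3 : Computable₂ (fun (p : α × ℕ) (d : X) => P p.1 d p.2.unpair.2) := by
    have := hP.comp h0
    exact this
  have h4 : Computable (fun p : α × ℕ => Encodable.decode (α := X) p.2.unpair.1) :=
    Computable.decode.comp (Computable.fst.comp (Computable.unpair.comp .snd))
  have h5 : Computable₂ (fun (a : α) (m : ℕ) =>
      (Option.casesOn (Encodable.decode (α := X) m.unpair.1) false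
        (fun d => P a d m.unpair.2) : Bool)) := by
    have h6 := Computable.option_casesOn h4 (Computable.const false) h3
    exact h6
  refine (rePred_exists h5).of_eq fun a => ?_
  constructor
  · rintro ⟨m, hm⟩
    cases hdec : Encodable.decode (α := X) m.unpair.1 with
    | none => rw [hdec] at hm; simp at hm
    | some d =>
      rw [hdec] at hm
      exact ⟨d, _, hm⟩
  · rintro ⟨d, k, hk⟩
    refine ⟨Nat.pair (Encodable.encode d) k, ?_⟩
    simp only [Nat.unpair_pair, Encodable.encodek]
    exact hk

lemma cPpQ {α : Type*} [Primcodable α] {n : α → ℕ} (hn : Computable n) :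
    Computable (fun a => ppQ (n a)) :=
  Computable.pair (cRatMul (.const 3) (cRatPow (1/2) (cadd hn (.const 2))))
    (cRatPow (1/2) (cadd hn (.const 2)))

lemma cPP {R : (ℚ × ℚ) × ℚ → ℕ → Bool} (hR : Computable₂ R) (M : ℕ) :
    REPred (fun c : Nat.Partrec.Code => ∃ (d : (ℚ × ℚ) × ℚ) (k : ℕ), (R d k &&
      decide (qdist (ppQ (Nat.pair (Encodable.encode c) M)) d.1 < d.2)) = true) := by
  refine rePred_exists_code (P := fun (c : Nat.Partrec.Code) (d : (ℚ × ℚ) × ℚ) (k : ℕ) => (R d k &&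
      decide (qdist (ppQ (Nat.pair (Encodable.encode c) M)) d.1 < d.2))) ?_
  have hn : Computable (fun q : (Nat.Partrec.Code × ((ℚ × ℚ) × ℚ)) × ℕ =>
      Nat.pair (Encodable.encode q.1.1) M) :=
    Primrec₂.natPair.to_comp.comp
      (Computable.encode.comp (Computable.fst.comp .fst)) (.const M)
  have h1 : Computable (fun q : (Nat.Partrec.Code × ((ℚ × ℚ) × ℚ)) × ℕ => R q.1.2 q.2) :=
    hR.comp (Computable.snd.comp .fst) .snd
  have h2 : Computable (fun q : (Nat.Partrec.Code × ((ℚ × ℚ) × ℚ)) × ℕ =>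
      decide (qdist (ppQ (Nat.pair (Encodable.encode q.1.1) M)) q.1.2.1 < q.1.2.2)) :=
    cRatLt (cQdist (cPpQ hn) (Computable.fst.comp (Computable.snd.comp .fst)))
      (Computable.snd.comp (Computable.snd.comp .fst))
  exact Primrec.and.to_comp.comp h1 h2

lemma main_aux (T : Set (ℝ × ℝ)) (hT : T ⊆ DD BB) (hPi : IsPi01Closed T)
    (htree : IsTreeContinuum T) : 1/8 ≤ Metric.hausdorffDist T (DD BB) := by
  by_contra! hlt
  obtain ⟨⟨⟨hcomp, hconn⟩, -, -⟩, hfin⟩ := htree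
  have hD1 : gam BB (-1) ∈ DD BB := ⟨-1, by norm_num, rfl⟩
  have hD2 : gam BB 1 ∈ DD BB := ⟨1, by norm_num, rfl⟩
  have hed := Metric.hausdorffEDist_ne_top_of_nonempty_of_bounded hconn.nonempty ⟨_, hD1⟩
    hcomp.isBounded (DD_compact BB).isBounded
  obtain ⟨l, hl, hld⟩ := Metric.exists_dist_lt_of_hausdorffDist_lt' hD1 hlt hed
  obtain ⟨r, hr, hrd⟩ := Metric.exists_dist_lt_of_hausdorffDist_lt' hD2 hlt hed
  have hl1 : l.1 < 0 := by
    have h := (le_max_left _ _).trans_lt hld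
    rw [Real.dist_eq, abs_lt] at h
    simp only [gam, fF_neg_one] at h
    linarith [h.2]
  have hr1 : 3/4 < r.1 := by
    have h := (le_max_left _ _).trans_lt hrd
    rw [Real.dist_eq, abs_lt] at h
    simp only [gam, fF_one] at h
    linarith [h.1]
  have hlx : ∀ n, l.1 < xx n := fun n => by
    rw [xx_eq]; linarith [ww_pos n]
  have hrx : ∀ n, xx n < r.1 := fun n => (xx_le n).trans_lt hr1
  have hpos : ∀ n, 0 < aR BB n → pp n ∈ T := by
    intro n hn
    obtain ⟨s, hs, hs1⟩ := hconn.isPreconnected.intermediate_value hl hr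
      continuous_fst.continuousOn ⟨(hlx n).le, (hrx n).le⟩
    obtain ⟨t, -, rfl⟩ := hT hs
    rw [fF_inj_xx BB n hn hs1, gam_xx] at hs
    exact hs
  have hfin2 : {n | IsRamificationPoint T (bb n)}.Finite :=
    hfin.preimage (f := bb) (fun m _ n _ h => xx_inj (congrArg Prod.fst h))
  obtain ⟨N, hN⟩ := hfin2.bddAbove
  have hchar : ∀ c : Nat.Partrec.Code, ¬ (c.eval 0).Dom ↔
      pp (Nat.pair (Encodable.encode c) (N + 1)) ∉ T := by
    intro c
    rw [← BB_iff c (N + 1), ← aR_pos_iff, not_iff_not]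
    refine ⟨hpos _, fun h => ?_⟩
    by_contra h0
    have ha : aR BB (Nat.pair (Encodable.encode c) (N + 1)) = 0 :=
      le_antisymm (not_lt.1 h0) (aR_nonneg _ _)
    have := hN (ramif BB _ ha hT hconn.isPreconnected hl hr (hlx _) (hrx _) h)
    have := Nat.right_le_pair (Encodable.encode c) (N + 1)
    omega
  obtain ⟨W, hW, hTW⟩ := hPi
  obtain ⟨R, hR, hR'⟩ := rePred_enum hW
  have hppQ : ∀ n, castPt (ppQ n) = pp n := by
    intro n
    simp only [castPt, ppQ, pp, xx, ww]
    push_cast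
    rfl
  have hP := cPP hR (N + 1)
  refine ComputablePred.halting_problem_not_re 0 (hP.of_eq fun c => ?_)
  rw [hchar c, hTW]
  simp only [Set.mem_sdiff, Set.mem_univ, true_and, not_not, Set.mem_iUnion, Set.mem_ofPred_eq,
    mem_ballOfCode, exists_prop]
  rw [← hppQ]
  simp only [← qdist_cast, Rat.cast_lt]
  refine exists_congr fun d => ?_
  rw [hR' d]
  simp only [Bool.and_eq_true, decide_eq_true_eq, exists_and_right]

end Main

theorem exists_computable_dendrite_not_star_including_pi01_tree :
    ∃ D : Set (ℝ × ℝ), IsComputableClosed D ∧ IsDendrite D ∧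
      ∃ ε : ℝ, 0 < ε ∧ ∀ T : Set (ℝ × ℝ), T ⊆ D → IsPi01Closed T → IsTreeContinuum T →
        ε ≤ Metric.hausdorffDist T D :=
  ⟨DD BB, DD_computable cBB, DD_dendrite BB, 1/8, by norm_num, main_aux⟩
end
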